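/- Let n ≥ 0, ℓ ≥ 1, let κ ∈ Z^ℓ be any multicharge and let λ be an ℓ-multipartition of n. Then deg_e(λ) = Σ_{t∈Std(λ)} deg_e(t) ≥ 0 for every e ∈ {0, 2, 3, 4, …}, and Deg_p(λ) = Σ_{k≥1} deg_{p^k}(λ) ≥ 0 for every prime number p. -/

import Mathlib

open scoped BigOperators
open scoped Classical

namespace Paper

/-! ## Quantum integers -/

/-- The quantum integer `[d]_x` in a field, for `d ∈ ℤ`. -/
noncomputable def qint {K : Type*} [Field K] (x : K) (d : ℤ) : K :=
  if 0 ≤ d then ∑ k ∈ Finset.range d.toNat, x ^ k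
  else -∑ k ∈ Finset.range (-d).toNat, x ^ (-((k : ℤ) + 1))

/-- The quantum integer `[d]_t` in a commutative ring, for an invertible `t` and `d ∈ ℤ`. -/
def qintU {O : Type*} [CommRing O] (t : Oˣ) (d : ℤ) : O :=
  if 0 ≤ d then ∑ k ∈ Finset.range d.toNat, (t : O) ^ k
  else -∑ k ∈ Finset.range (-d).toNat, ((t ^ (-((k : ℤ) + 1)) : Oˣ) : O)

/-! ## Nodes, multipartitions and standard tableaux -/

/-- A node `(l, r, c)`: component `l`, row `r`, column `c` (all `0`-based). -/
abbrev Node : Type := ℕ × ℕ × ℕ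

/-- `nodeBelow A B` holds when `B` is strictly below `A`, i.e. `A < B` lexicographically. -/
def nodeBelow (A B : Node) : Prop :=
  A.1 < B.1 ∨ (A.1 = B.1 ∧ (A.2.1 < B.2.1 ∨ (A.2.1 = B.2.1 ∧ A.2.2 < B.2.2)))

/-- An `ℓ`-multipartition of `n`. -/
structure Multipartition (ℓ n : ℕ) : Type where
  part : ℕ → ℕ → ℕ
  comp_bound : ∀ l, ℓ ≤ l → ∀ r, part l r = 0
  antitone : ∀ l, Antitone (part l)
  row_bound : ∀ l r, n ≤ r → part l r = 0
  size : (∑ l ∈ Finset.range ℓ, ∑ r ∈ Finset.range n, part l r) = n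

/-- The diagram of a multipartition. -/
def Multipartition.diagram {ℓ n : ℕ} (μ : Multipartition ℓ n) : Set Node :=
  {A | A.2.2 < μ.part A.1 A.2.1}

/-- A standard tableau: a bijection from the diagram of its shape onto `{1, …, n}`
that increases along rows and down columns of each component (it takes the value
`0` off the diagram, so that it is determined by its entries). -/
structure StdTableau (ℓ n : ℕ) : Type where
  shape : Multipartition ℓ n
  entry : Node → ℕ
  entry_zero : ∀ A, A ∉ shape.diagram → entry A = 0
  bijOn : Set.BijOn entry shape.diagram (Set.Icc 1 n)
  row_inc : ∀ l r c, (l, r, c + 1) ∈ shape.diagram → entry (l, r, c) < entry (l, r, c + 1)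
  col_inc : ∀ l r c, (l, r + 1, c) ∈ shape.diagram → entry (l, r, c) < entry (l, r + 1, c)

/-- The node of a standard tableau containing the entry `k`. -/
noncomputable def StdTableau.node {ℓ n : ℕ} (T : StdTableau ℓ n) (k : ℕ) : Node :=
  Function.invFunOn T.entry T.shape.diagram k

/-- The content `c_k(T) = κ_l + c - r` of the entry `k` in the tableau `T`
(`1 ≤ k ≤ n`). -/
noncomputable def content {ℓ n : ℕ} (κ : ℕ → ℤ) (T : StdTableau ℓ n) (k : ℕ) : ℤ :=
  κ (T.node k).1 + ((T.node k).2.2 : ℤ) - ((T.node k).2.1 : ℤ)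

/-- The residue sequence of a standard tableau, in `I^n` with `I = ℤ/eℤ`. -/
noncomputable def resSeq {ℓ n : ℕ} (e : ℕ) (κ : ℕ → ℤ) (T : StdTableau ℓ n) :
    Fin n → ZMod e :=
  fun k => ((content κ T (k.1 + 1) : ℤ) : ZMod e)

/-- The residue of a node. -/
def resNode (e : ℕ) (κ : ℕ → ℤ) (A : Node) : ZMod e :=
  ((κ A.1 + (A.2.2 : ℤ) - (A.2.1 : ℤ) : ℤ) : ZMod e)

/-- A set of nodes is the diagram of a multipartition (with at most `ℓ` components)
iff it is finite and downward closed in rows and columns. -/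
def IsDiagramSet (ℓ : ℕ) (S : Set Node) : Prop :=
  S.Finite ∧ (∀ A ∈ S, A.1 < ℓ) ∧
    (∀ l r c, (l, r, c + 1) ∈ S → (l, r, c) ∈ S) ∧
    (∀ l r c, (l, r + 1, c) ∈ S → (l, r, c) ∈ S)

/-- `A` is an addable node of the diagram `S`. -/
def Addable (ℓ : ℕ) (S : Set Node) (A : Node) : Prop :=
  A ∉ S ∧ IsDiagramSet ℓ (S ∪ {A})

/-- `A` is a removable node of the diagram `S`. -/
def Removable (ℓ : ℕ) (S : Set Node) (A : Node) : Prop :=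
  A ∈ S ∧ IsDiagramSet ℓ (S \ {A})

/-- `d_A(S)`: the number of addable nodes of `S` of the same residue as `A` strictly
below `A`, minus the number of removable ones. -/
noncomputable def dNode (ℓ e : ℕ) (κ : ℕ → ℤ) (S : Set Node) (A : Node) : ℤ :=
  (Set.ncard {B | Addable ℓ S B ∧ resNode e κ B = resNode e κ A ∧ nodeBelow A B} : ℤ) -
    (Set.ncard {B | Removable ℓ S B ∧ resNode e κ B = resNode e κ A ∧ nodeBelow A B} : ℤ)

/-- The Brundan–Kleshchev–Wang degree `deg_e(T)` of a standard tableau, written as the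
telescoping sum of the recursion `deg_e(T) = deg_e(T↓(n-1)) + d_A(Shape(T))`. -/
noncomputable def degE {ℓ n : ℕ} (e : ℕ) (κ : ℕ → ℤ) (T : StdTableau ℓ n) : ℤ :=
  ∑ m ∈ Finset.Icc 1 n,
    dNode ℓ e κ {A | A ∈ T.shape.diagram ∧ T.entry A ≤ m} (T.node m)

/-- The restriction of the diagram of `T` to entries `≤ m` (the diagram of `Shape(T↓m)`). -/
def restDiag {ℓ n : ℕ} (T : StdTableau ℓ n) (m : ℕ) : Set Node :=
  {A | A ∈ T.shape.diagram ∧ T.entry A ≤ m}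

/-- Dominance order on standard tableaux: `domTab S T` iff `S ⊵ T`. -/
def domTab {ℓ n : ℕ} (S T : StdTableau ℓ n) : Prop :=
  ∀ m l i : ℕ,
    Set.ncard {A | A ∈ restDiag T m ∧ (A.1 < l ∨ (A.1 = l ∧ A.2.1 ≤ i))} ≤
      Set.ncard {A | A ∈ restDiag S m ∧ (A.1 < l ∨ (A.1 = l ∧ A.2.1 ≤ i))}

/-- Interchange the entries `r` and `r + 1` in an entry function. -/
def swapEntry (f : Node → ℕ) (r : ℕ) : Node → ℕ :=
  fun A => if f A = r then r + 1 else if f A = r + 1 then r else f A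

/-- `ρ_r(T) = c_r(T) - c_{r+1}(T)`, the axial distance. -/
noncomputable def rhoTab {ℓ n : ℕ} (κ : ℕ → ℤ) (T : StdTableau ℓ n) (r : ℕ) : ℤ :=
  content κ T r - content κ T (r + 1)

/-- The entry function of the row-reading initial tableau `t^λ`. -/
noncomputable def tlamEntry {ℓ n : ℕ} (μ : Multipartition ℓ n) (A : Node) : ℕ :=
  if A ∈ μ.diagram then
    (∑ l ∈ Finset.range A.1, ∑ r ∈ Finset.range n, μ.part l r) +
      (∑ r ∈ Finset.range A.2.1, μ.part A.1 r) + A.2.2 + 1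
  else 0

/-- The finite set of possible contents of standard tableaux of size `n`. -/
noncomputable def contFinset (ℓ n : ℕ) (κ : ℕ → ℤ) : Finset ℤ :=
  ((Finset.range ℓ ×ˢ Finset.range n ×ˢ Finset.range n).image
      (fun x => κ x.1 + (x.2.2 : ℤ) - (x.2.1 : ℤ))).filter
    (fun c => ∃ T : StdTableau ℓ n, ∃ k, 1 ≤ k ∧ k ≤ n ∧ content κ T k = c)

/-- The standard tableau (if any) obtained from `T` by interchanging the entries
`r` and `r + 1`; i.e. `T·s_r` if it is standard, and `none` otherwise. -/
noncomputable def oSwapO {ℓ n : ℕ} (T : StdTableau ℓ n) (r : ℕ) :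
    Option (StdTableau ℓ n) :=
  if h : ∃ V : StdTableau ℓ n, V.entry = swapEntry T.entry r then some (Classical.choose h)
  else none

/-- `oSwap` extended to `Option`. -/
noncomputable def oSwap {ℓ n : ℕ} (X : Option (StdTableau ℓ n)) (r : ℕ) :
    Option (StdTableau ℓ n) :=
  X.bind fun T => oSwapO T r

/-- Evaluate a seminormal coefficient system on an optional tableau (by `0` if none). -/
noncomputable def aE {ℓ n : ℕ} {K : Type*} [Field K] (α : ℕ → StdTableau ℓ n → K) (r : ℕ)
    (X : Option (StdTableau ℓ n)) : K :=
  X.elim 0 (α r)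

/-! ## Separation and idempotent subrings -/

/-- `(K, t)` separates `Std(P_n)` (field version):
`[n]!_t ∏_{1 ≤ l < m ≤ ℓ} ∏_{-n < d < n} [κ_l - κ_m + d]_t ≠ 0`. -/
def SeparatesF {K : Type*} [Field K] (t : Kˣ) (n ℓ : ℕ) (κ : ℕ → ℤ) : Prop :=
  ((∏ d ∈ Finset.Icc 1 n, qint (t : K) (d : ℤ)) *
      ∏ l ∈ Finset.range ℓ, ∏ m ∈ Finset.Ioo l ℓ,
        ∏ d ∈ Finset.Ioo (-(n : ℤ)) (n : ℤ), qint (t : K) (κ l - κ m + d)) ≠ 0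

/-- `(O, t)` separates `Std(P_n)` (subring version): the separation element is a unit. -/
def SeparatesU {O : Type*} [CommRing O] (t : Oˣ) (n ℓ : ℕ) (κ : ℕ → ℤ) : Prop :=
  IsUnit ((∏ d ∈ Finset.Icc 1 n, qintU t (d : ℤ)) *
      ∏ l ∈ Finset.range ℓ, ∏ m ∈ Finset.Ioo l ℓ,
        ∏ d ∈ Finset.Ioo (-(n : ℤ)) (n : ℤ), qintU t (κ l - κ m + d))

/-- `(O, t)` is an `e`-idempotent subring of the field `K`. -/
def IsIdempotentSubring {K : Type*} [Field K] (O : Subring K) (t : Oˣ) (e n ℓ : ℕ)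
    (κ : ℕ → ℤ) : Prop :=
  SeparatesU t n ℓ κ ∧
    (∀ k : ℤ, ¬(e : ℤ) ∣ k → IsUnit (qintU t k)) ∧
    (∀ k : ℤ, (e : ℤ) ∣ k → qintU t k ∈ Ideal.jacobson (⊥ : Ideal O))

/-! ## The cyclotomic Hecke algebra, by generators and relations -/

/-- Generators `L_1, …, L_n`, `T_1, …, T_{n-1}` (here `0`-based). -/
inductive HeckeGen (n : ℕ) : Type
  | L : Fin n → HeckeGen n
  | T : Fin (n - 1) → HeckeGen n

/-- The position `r` of the pair `(r, r+1)` interchanged by the `r`-th transposition. -/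
def pL {n : ℕ} (r : Fin (n - 1)) : Fin n := ⟨r.1, by have := r.2; omega⟩

/-- The position `r + 1` of the pair interchanged by the `r`-th transposition. -/
def pR {n : ℕ} (r : Fin (n - 1)) : Fin n := ⟨r.1 + 1, by have := r.2; omega⟩

/-- The position `r + 2`, used in braid relations. -/
def pM {n : ℕ} (r : Fin (n - 1)) (hr : r.1 + 1 < n - 1) : Fin n := ⟨r.1 + 2, by omega⟩

/-- The free algebra generator `L_k`. -/
def hL (R : Type*) [CommRing R] {n : ℕ} (k : Fin n) : FreeAlgebra R (HeckeGen n) :=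
  FreeAlgebra.ι R (HeckeGen.L k)

/-- The free algebra generator `T_r`. -/
def hT (R : Type*) [CommRing R] {n : ℕ} (r : Fin (n - 1)) : FreeAlgebra R (HeckeGen n) :=
  FreeAlgebra.ι R (HeckeGen.T r)

/-- The defining relations of the integral cyclotomic Hecke algebra `H_n(R, t, κ)`. -/
inductive HeckeRel (R : Type*) [CommRing R] (t : Rˣ) (n ℓ : ℕ) (κ : ℕ → ℤ) :
    FreeAlgebra R (HeckeGen n) → FreeAlgebra R (HeckeGen n) → Prop
  | cyc (h : 0 < n) :
      HeckeRel R t n ℓ κ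
        (((List.range ℓ).map fun l =>
          hL R (⟨0, h⟩ : Fin n) - algebraMap R _ (qintU t (κ l))).prod) 0
  | quad (r : Fin (n - 1)) :
      HeckeRel R t n ℓ κ ((hT R r + 1) * (hT R r - algebraMap R _ (t : R))) 0
  | LL (k m : Fin n) : HeckeRel R t n ℓ κ (hL R k * hL R m) (hL R m * hL R k)
  | TTfar (r s : Fin (n - 1)) (h : r.1 + 1 < s.1 ∨ s.1 + 1 < r.1) :
      HeckeRel R t n ℓ κ (hT R r * hT R s) (hT R s * hT R r)
  | braid (r s : Fin (n - 1)) (h : s.1 = r.1 + 1) :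
      HeckeRel R t n ℓ κ (hT R r * hT R s * hT R r) (hT R s * hT R r * hT R s)
  | TL (r : Fin (n - 1)) (k : Fin n) (h : k.1 ≠ r.1 ∧ k.1 ≠ r.1 + 1) :
      HeckeRel R t n ℓ κ (hT R r * hL R k) (hL R k * hT R r)
  | LT (r : Fin (n - 1)) :
      HeckeRel R t n ℓ κ (hL R (pR r) * (hT R r - algebraMap R _ (t : R) + 1))
        (hT R r * hL R (pL r) + 1)

/-- The integral cyclotomic Hecke algebra of type `A`, `H_n(R, t, κ)`. -/
noncomputable abbrev CycHecke (R : Type*) [CommRing R] (t : Rˣ) (n ℓ : ℕ) (κ : ℕ → ℤ) :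
    Type _ :=
  RingQuot (HeckeRel R t n ℓ κ)

/-- The generator `L_k` of the cyclotomic Hecke algebra. -/
noncomputable def Lgen (R : Type*) [CommRing R] (t : Rˣ) (n ℓ : ℕ) (κ : ℕ → ℤ)
    (k : Fin n) : CycHecke R t n ℓ κ :=
  RingQuot.mkAlgHom R (HeckeRel R t n ℓ κ) (hL R k)

/-- The generator `T_r` of the cyclotomic Hecke algebra. -/
noncomputable def Tgen (R : Type*) [CommRing R] (t : Rˣ) (n ℓ : ℕ) (κ : ℕ → ℤ)
    (r : Fin (n - 1)) : CycHecke R t n ℓ κ :=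
  RingQuot.mkAlgHom R (HeckeRel R t n ℓ κ) (hT R r)

end Paper
/-! ## Quiver Hecke (KLR) algebras, by generators and relations -/

namespace Paper

/-- Generators `e(i)` (`i ∈ I^n`), `ψ_1, …, ψ_{n-1}`, `y_1, …, y_n` (here `0`-based). -/
inductive KLRGen (n e : ℕ) : Type
  | idem : (Fin n → ZMod e) → KLRGen n e
  | psi : Fin (n - 1) → KLRGen n e
  | y : Fin n → KLRGen n e

/-- The free algebra generator `e(i)`. -/
def kE (R : Type*) [CommRing R] {n e : ℕ} (i : Fin n → ZMod e) :
    FreeAlgebra R (KLRGen n e) :=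
  FreeAlgebra.ι R (KLRGen.idem i)

/-- The free algebra generator `ψ_r`. -/
def kPsi (R : Type*) [CommRing R] {n e : ℕ} (r : Fin (n - 1)) :
    FreeAlgebra R (KLRGen n e) :=
  FreeAlgebra.ι R (KLRGen.psi r)

/-- The free algebra generator `y_k`. -/
def kY (R : Type*) [CommRing R] {n e : ℕ} (k : Fin n) : FreeAlgebra R (KLRGen n e) :=
  FreeAlgebra.ι R (KLRGen.y k)

/-- `s_r · i`: interchange the entries of `i` at positions `r` and `r + 1`. -/
def swapSeq {n e : ℕ} (i : Fin n → ZMod e) (r : Fin (n - 1)) : Fin n → ZMod e :=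
  fun k => if k = pL r then i (pR r) else if k = pR r then i (pL r) else i k

/-- The defining relations of the cyclotomic quiver Hecke algebra `R_n^Λ(R)` where
`Λ = Σ_l Λ_{κ_l mod e}`. -/
inductive KLRRel (R : Type*) [CommRing R] (n e ℓ : ℕ) [NeZero e] (κ : ℕ → ℤ) :
    FreeAlgebra R (KLRGen n e) → FreeAlgebra R (KLRGen n e) → Prop
  | cyc (h : 0 < n) (i : Fin n → ZMod e) :
      KLRRel R n e ℓ κ
        ((kY R (⟨0, h⟩ : Fin n)) ^
            (((Finset.range ℓ).filter fun l => ((κ l : ZMod e) = i ⟨0, h⟩)).card) *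
          kE R i) 0
  | orth (i j : Fin n → ZMod e) (h : i ≠ j) : KLRRel R n e ℓ κ (kE R i * kE R j) 0
  | idem (i : Fin n → ZMod e) : KLRRel R n e ℓ κ (kE R i * kE R i) (kE R i)
  | complete : KLRRel R n e ℓ κ (∑ i : Fin n → ZMod e, kE R i) 1
  | yE (k : Fin n) (i : Fin n → ZMod e) :
      KLRRel R n e ℓ κ (kY R k * kE R i) (kE R i * kY R k)
  | psiE (r : Fin (n - 1)) (i : Fin n → ZMod e) :
      KLRRel R n e ℓ κ (kPsi R r * kE R i) (kE R (swapSeq i r) * kPsi R r)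
  | yy (k m : Fin n) : KLRRel R n e ℓ κ (kY R k * kY R m) (kY R m * kY R k)
  | psiyEq (r : Fin (n - 1)) (i : Fin n → ZMod e) (h : i (pL r) = i (pR r)) :
      KLRRel R n e ℓ κ (kPsi R r * kY R (pR r) * kE R i)
        ((kY R (pL r) * kPsi R r + 1) * kE R i)
  | psiyNe (r : Fin (n - 1)) (i : Fin n → ZMod e) (h : i (pL r) ≠ i (pR r)) :
      KLRRel R n e ℓ κ (kPsi R r * kY R (pR r) * kE R i)
        (kY R (pL r) * kPsi R r * kE R i)
  | ypsiEq (r : Fin (n - 1)) (i : Fin n → ZMod e) (h : i (pL r) = i (pR r)) :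
      KLRRel R n e ℓ κ (kY R (pR r) * kPsi R r * kE R i)
        ((kPsi R r * kY R (pL r) + 1) * kE R i)
  | ypsiNe (r : Fin (n - 1)) (i : Fin n → ZMod e) (h : i (pL r) ≠ i (pR r)) :
      KLRRel R n e ℓ κ (kY R (pR r) * kPsi R r * kE R i)
        (kPsi R r * kY R (pL r) * kE R i)
  | psiyFar (r : Fin (n - 1)) (k : Fin n) (h : k.1 ≠ r.1 ∧ k.1 ≠ r.1 + 1) :
      KLRRel R n e ℓ κ (kPsi R r * kY R k) (kY R k * kPsi R r)
  | psipsiFar (r s : Fin (n - 1)) (h : r.1 + 1 < s.1 ∨ s.1 + 1 < r.1) :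
      KLRRel R n e ℓ κ (kPsi R r * kPsi R s) (kPsi R s * kPsi R r)
  | quadEq (r : Fin (n - 1)) (i : Fin n → ZMod e) (h : i (pL r) = i (pR r)) :
      KLRRel R n e ℓ κ (kPsi R r ^ 2 * kE R i) 0
  | quadR (r : Fin (n - 1)) (i : Fin n → ZMod e)
      (h1 : i (pR r) = i (pL r) + 1) (h2 : i (pL r) ≠ i (pR r) + 1) :
      KLRRel R n e ℓ κ (kPsi R r ^ 2 * kE R i) ((kY R (pL r) - kY R (pR r)) * kE R i)
  | quadL (r : Fin (n - 1)) (i : Fin n → ZMod e)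
      (h1 : i (pL r) = i (pR r) + 1) (h2 : i (pR r) ≠ i (pL r) + 1) :
      KLRRel R n e ℓ κ (kPsi R r ^ 2 * kE R i) ((kY R (pR r) - kY R (pL r)) * kE R i)
  | quadBoth (r : Fin (n - 1)) (i : Fin n → ZMod e)
      (h1 : i (pR r) = i (pL r) + 1) (h2 : i (pL r) = i (pR r) + 1) :
      KLRRel R n e ℓ κ (kPsi R r ^ 2 * kE R i)
        ((kY R (pR r) - kY R (pL r)) * (kY R (pL r) - kY R (pR r)) * kE R i)
  | quadNone (r : Fin (n - 1)) (i : Fin n → ZMod e) (h1 : i (pL r) ≠ i (pR r))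
      (h2 : i (pR r) ≠ i (pL r) + 1) (h3 : i (pL r) ≠ i (pR r) + 1) :
      KLRRel R n e ℓ κ (kPsi R r ^ 2 * kE R i) (kE R i)
  | braidR (r : Fin (n - 1)) (hr : r.1 + 1 < n - 1) (i : Fin n → ZMod e)
      (h0 : i (pM r hr) = i (pL r)) (h1 : i (pR r) = i (pL r) + 1)
      (h2 : i (pL r) ≠ i (pR r) + 1) :
      KLRRel R n e ℓ κ (kPsi R r * kPsi R ⟨r.1 + 1, hr⟩ * kPsi R r * kE R i)
        ((kPsi R ⟨r.1 + 1, hr⟩ * kPsi R r * kPsi R ⟨r.1 + 1, hr⟩ - 1) * kE R i)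
  | braidL (r : Fin (n - 1)) (hr : r.1 + 1 < n - 1) (i : Fin n → ZMod e)
      (h0 : i (pM r hr) = i (pL r)) (h1 : i (pL r) = i (pR r) + 1)
      (h2 : i (pR r) ≠ i (pL r) + 1) :
      KLRRel R n e ℓ κ (kPsi R r * kPsi R ⟨r.1 + 1, hr⟩ * kPsi R r * kE R i)
        ((kPsi R ⟨r.1 + 1, hr⟩ * kPsi R r * kPsi R ⟨r.1 + 1, hr⟩ + 1) * kE R i)
  | braidBoth (r : Fin (n - 1)) (hr : r.1 + 1 < n - 1) (i : Fin n → ZMod e)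
      (h0 : i (pM r hr) = i (pL r)) (h1 : i (pR r) = i (pL r) + 1)
      (h2 : i (pL r) = i (pR r) + 1) :
      KLRRel R n e ℓ κ (kPsi R r * kPsi R ⟨r.1 + 1, hr⟩ * kPsi R r * kE R i)
        ((kPsi R ⟨r.1 + 1, hr⟩ * kPsi R r * kPsi R ⟨r.1 + 1, hr⟩ +
            kY R (pL r) - 2 * kY R (pR r) + kY R (pM r hr)) * kE R i)
  | braidNone (r : Fin (n - 1)) (hr : r.1 + 1 < n - 1) (i : Fin n → ZMod e)
      (h : ¬(i (pM r hr) = i (pL r) ∧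
        (i (pR r) = i (pL r) + 1 ∨ i (pL r) = i (pR r) + 1))) :
      KLRRel R n e ℓ κ (kPsi R r * kPsi R ⟨r.1 + 1, hr⟩ * kPsi R r * kE R i)
        (kPsi R ⟨r.1 + 1, hr⟩ * kPsi R r * kPsi R ⟨r.1 + 1, hr⟩ * kE R i)

/-- The cyclotomic quiver Hecke algebra `R_n^Λ(R)`, `Λ = Σ_l Λ_{κ_l mod e}`. -/
noncomputable abbrev KLR (R : Type*) [CommRing R] (n e ℓ : ℕ) [NeZero e] (κ : ℕ → ℤ) :
    Type _ :=
  RingQuot (KLRRel R n e ℓ κ)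

/-- The generator `e(i)` of the cyclotomic quiver Hecke algebra. -/
noncomputable def KeGen (R : Type*) [CommRing R] (n e ℓ : ℕ) [NeZero e] (κ : ℕ → ℤ)
    (i : Fin n → ZMod e) : KLR R n e ℓ κ :=
  RingQuot.mkAlgHom R (KLRRel R n e ℓ κ) (kE R i)

/-- The generator `ψ_r` of the cyclotomic quiver Hecke algebra. -/
noncomputable def KpsiGen (R : Type*) [CommRing R] (n e ℓ : ℕ) [NeZero e] (κ : ℕ → ℤ)
    (r : Fin (n - 1)) : KLR R n e ℓ κ :=
  RingQuot.mkAlgHom R (KLRRel R n e ℓ κ) (kPsi R r)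

/-- The generator `y_k` of the cyclotomic quiver Hecke algebra. -/
noncomputable def KyGen (R : Type*) [CommRing R] (n e ℓ : ℕ) [NeZero e] (κ : ℕ → ℤ)
    (k : Fin n) : KLR R n e ℓ κ :=
  RingQuot.mkAlgHom R (KLRRel R n e ℓ κ) (kY R k)

end Paper
/-! ## The deformed cyclotomic quiver Hecke algebra -/

namespace Paper

/-- `y_k^⟨d⟩ = t^d y_k + [d]_t` in the free algebra. -/
def ydot (R : Type*) [CommRing R] (t : Rˣ) {n e : ℕ} (d : ℤ) (k : Fin n) :
    FreeAlgebra R (KLRGen n e) :=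
  algebraMap R _ ((t ^ d : Rˣ) : R) * kY R k + algebraMap R _ (qintU t d)

/-- `ρ_r(i) = î_r - î_{r+1}` for `i ∈ I^n`. -/
def rhoI {n e : ℕ} (i : Fin n → ZMod e) (r : Fin (n - 1)) : ℤ :=
  ((i (pL r)).val : ℤ) - ((i (pR r)).val : ℤ)

/-- The defining relations of the deformed cyclotomic quiver Hecke algebra `R_n(O)`. -/
inductive DefKLRRel (R : Type*) [CommRing R] (t : Rˣ) (n e ℓ : ℕ) [NeZero e] (κ : ℕ → ℤ) :
    FreeAlgebra R (KLRGen n e) → FreeAlgebra R (KLRGen n e) → Prop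
  | cyc (h : 0 < n) (i : Fin n → ZMod e) :
      DefKLRRel R t n e ℓ κ
        ((((List.range ℓ).map fun l =>
            if ((κ l : ZMod e) = i ⟨0, h⟩) then
              kY R (⟨0, h⟩ : Fin n) -
                algebraMap R _ (qintU t (κ l - ((i ⟨0, h⟩).val : ℤ)))
            else 1).prod) * kE R i) 0
  | orth (i j : Fin n → ZMod e) (h : i ≠ j) : DefKLRRel R t n e ℓ κ (kE R i * kE R j) 0
  | idem (i : Fin n → ZMod e) : DefKLRRel R t n e ℓ κ (kE R i * kE R i) (kE R i)
  | complete : DefKLRRel R t n e ℓ κ (∑ i : Fin n → ZMod e, kE R i) 1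
  | yE (k : Fin n) (i : Fin n → ZMod e) :
      DefKLRRel R t n e ℓ κ (kY R k * kE R i) (kE R i * kY R k)
  | psiE (r : Fin (n - 1)) (i : Fin n → ZMod e) :
      DefKLRRel R t n e ℓ κ (kPsi R r * kE R i) (kE R (swapSeq i r) * kPsi R r)
  | yy (k m : Fin n) : DefKLRRel R t n e ℓ κ (kY R k * kY R m) (kY R m * kY R k)
  | psiyEq (r : Fin (n - 1)) (i : Fin n → ZMod e) (h : i (pL r) = i (pR r)) :
      DefKLRRel R t n e ℓ κ (kPsi R r * kY R (pR r) * kE R i)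
        ((kY R (pL r) * kPsi R r + 1) * kE R i)
  | psiyNe (r : Fin (n - 1)) (i : Fin n → ZMod e) (h : i (pL r) ≠ i (pR r)) :
      DefKLRRel R t n e ℓ κ (kPsi R r * kY R (pR r) * kE R i)
        (kY R (pL r) * kPsi R r * kE R i)
  | ypsiEq (r : Fin (n - 1)) (i : Fin n → ZMod e) (h : i (pL r) = i (pR r)) :
      DefKLRRel R t n e ℓ κ (kY R (pR r) * kPsi R r * kE R i)
        ((kPsi R r * kY R (pL r) + 1) * kE R i)
  | ypsiNe (r : Fin (n - 1)) (i : Fin n → ZMod e) (h : i (pL r) ≠ i (pR r)) :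
      DefKLRRel R t n e ℓ κ (kY R (pR r) * kPsi R r * kE R i)
        (kPsi R r * kY R (pL r) * kE R i)
  | psiyFar (r : Fin (n - 1)) (k : Fin n) (h : k.1 ≠ r.1 ∧ k.1 ≠ r.1 + 1) :
      DefKLRRel R t n e ℓ κ (kPsi R r * kY R k) (kY R k * kPsi R r)
  | psipsiFar (r s : Fin (n - 1)) (h : r.1 + 1 < s.1 ∨ s.1 + 1 < r.1) :
      DefKLRRel R t n e ℓ κ (kPsi R r * kPsi R s) (kPsi R s * kPsi R r)
  | quadEq (r : Fin (n - 1)) (i : Fin n → ZMod e) (h : i (pL r) = i (pR r)) :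
      DefKLRRel R t n e ℓ κ (kPsi R r ^ 2 * kE R i) 0
  | quadR (r : Fin (n - 1)) (i : Fin n → ZMod e)
      (h1 : i (pR r) = i (pL r) + 1) (h2 : i (pL r) ≠ i (pR r) + 1) :
      DefKLRRel R t n e ℓ κ (kPsi R r ^ 2 * kE R i)
        ((ydot R t (1 + rhoI i r) (pL r) - kY R (pR r)) * kE R i)
  | quadL (r : Fin (n - 1)) (i : Fin n → ZMod e)
      (h1 : i (pL r) = i (pR r) + 1) (h2 : i (pR r) ≠ i (pL r) + 1) :
      DefKLRRel R t n e ℓ κ (kPsi R r ^ 2 * kE R i)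
        ((ydot R t (1 - rhoI i r) (pR r) - kY R (pL r)) * kE R i)
  | quadBoth (r : Fin (n - 1)) (i : Fin n → ZMod e)
      (h1 : i (pR r) = i (pL r) + 1) (h2 : i (pL r) = i (pR r) + 1) :
      DefKLRRel R t n e ℓ κ (kPsi R r ^ 2 * kE R i)
        ((ydot R t (1 + rhoI i r) (pL r) - kY R (pR r)) *
          (ydot R t (1 - rhoI i r) (pR r) - kY R (pL r)) * kE R i)
  | quadNone (r : Fin (n - 1)) (i : Fin n → ZMod e) (h1 : i (pL r) ≠ i (pR r))
      (h2 : i (pR r) ≠ i (pL r) + 1) (h3 : i (pL r) ≠ i (pR r) + 1) :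
      DefKLRRel R t n e ℓ κ (kPsi R r ^ 2 * kE R i) (kE R i)
  | braidBoth (r : Fin (n - 1)) (hr : r.1 + 1 < n - 1) (i : Fin n → ZMod e)
      (h0 : i (pM r hr) = i (pL r)) (h1 : i (pR r) = i (pL r) + 1)
      (h2 : i (pL r) = i (pR r) + 1) :
      DefKLRRel R t n e ℓ κ
        ((kPsi R r * kPsi R ⟨r.1 + 1, hr⟩ * kPsi R r -
            kPsi R ⟨r.1 + 1, hr⟩ * kPsi R r * kPsi R ⟨r.1 + 1, hr⟩) * kE R i)
        ((ydot R t (1 + rhoI i r) (pL r) + ydot R t (1 + rhoI i r) (pM r hr) -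
            ydot R t (1 + rhoI i r) (pR r) - ydot R t (1 - rhoI i r) (pR r)) * kE R i)
  | braidR (r : Fin (n - 1)) (hr : r.1 + 1 < n - 1) (i : Fin n → ZMod e)
      (h0 : i (pM r hr) = i (pL r)) (h1 : i (pR r) = i (pL r) + 1)
      (h2 : i (pL r) ≠ i (pR r) + 1) :
      DefKLRRel R t n e ℓ κ
        ((kPsi R r * kPsi R ⟨r.1 + 1, hr⟩ * kPsi R r -
            kPsi R ⟨r.1 + 1, hr⟩ * kPsi R r * kPsi R ⟨r.1 + 1, hr⟩) * kE R i)
        (algebraMap R _ (-(((t ^ (1 + rhoI i r) : Rˣ) : R))) * kE R i)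
  | braidL (r : Fin (n - 1)) (hr : r.1 + 1 < n - 1) (i : Fin n → ZMod e)
      (h0 : i (pM r hr) = i (pL r)) (h1 : i (pL r) = i (pR r) + 1)
      (h2 : i (pR r) ≠ i (pL r) + 1) :
      DefKLRRel R t n e ℓ κ
        ((kPsi R r * kPsi R ⟨r.1 + 1, hr⟩ * kPsi R r -
            kPsi R ⟨r.1 + 1, hr⟩ * kPsi R r * kPsi R ⟨r.1 + 1, hr⟩) * kE R i)
        (kE R i)
  | braidNone (r : Fin (n - 1)) (hr : r.1 + 1 < n - 1) (i : Fin n → ZMod e)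
      (h : ¬(i (pM r hr) = i (pL r) ∧
        (i (pR r) = i (pL r) + 1 ∨ i (pL r) = i (pR r) + 1))) :
      DefKLRRel R t n e ℓ κ
        ((kPsi R r * kPsi R ⟨r.1 + 1, hr⟩ * kPsi R r -
            kPsi R ⟨r.1 + 1, hr⟩ * kPsi R r * kPsi R ⟨r.1 + 1, hr⟩) * kE R i) 0

/-- The deformed cyclotomic quiver Hecke algebra `R_n(R)`. -/
noncomputable abbrev DefKLR (R : Type*) [CommRing R] (t : Rˣ) (n e ℓ : ℕ) [NeZero e]
    (κ : ℕ → ℤ) : Type _ :=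
  RingQuot (DefKLRRel R t n e ℓ κ)

/-- The generator `f_i` of the deformed cyclotomic quiver Hecke algebra. -/
noncomputable def DfGen (R : Type*) [CommRing R] (t : Rˣ) (n e ℓ : ℕ) [NeZero e]
    (κ : ℕ → ℤ) (i : Fin n → ZMod e) : DefKLR R t n e ℓ κ :=
  RingQuot.mkAlgHom R (DefKLRRel R t n e ℓ κ) (kE R i)

/-- The generator `ψ_r` of the deformed cyclotomic quiver Hecke algebra. -/
noncomputable def DpsiGen (R : Type*) [CommRing R] (t : Rˣ) (n e ℓ : ℕ) [NeZero e]
    (κ : ℕ → ℤ) (r : Fin (n - 1)) : DefKLR R t n e ℓ κ :=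
  RingQuot.mkAlgHom R (DefKLRRel R t n e ℓ κ) (kPsi R r)

/-- The generator `y_k` of the deformed cyclotomic quiver Hecke algebra. -/
noncomputable def DyGen (R : Type*) [CommRing R] (t : Rˣ) (n e ℓ : ℕ) [NeZero e]
    (κ : ℕ → ℤ) (k : Fin n) : DefKLR R t n e ℓ κ :=
  RingQuot.mkAlgHom R (DefKLRRel R t n e ℓ κ) (kY R k)

/-! ## Seminormal idempotents -/

/-- The seminormal idempotent `F_T` of the semisimple cyclotomic Hecke algebra:
`F_T = ∏_{k=1}^n ∏_{c ∈ Cont(n), [c_k(T)] ≠ [c]} (L_k - [c]) / ([c_k(T)] - [c])`. -/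
noncomputable def Fidem (K : Type*) [Field K] (tK : Kˣ) (n ℓ : ℕ) (κ : ℕ → ℤ)
    (T : StdTableau ℓ n) : CycHecke K tK n ℓ κ :=
  ((List.finRange n).map (fun k =>
    (((contFinset ℓ n κ).sort (· ≤ ·)).map (fun c =>
      if qint (tK : K) (content κ T (k.1 + 1)) ≠ qint (tK : K) c then
        (Lgen K tK n ℓ κ k - algebraMap K _ (qint (tK : K) c)) *
          algebraMap K _ ((qint (tK : K) (content κ T (k.1 + 1)) - qint (tK : K) c)⁻¹)
      else 1)).prod)).prod

/-- The residue idempotent `f_i = Σ_{T ∈ Std(i)} F_T`. -/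
noncomputable def fres (K : Type*) [Field K] (tK : Kˣ) (n ℓ e : ℕ) (κ : ℕ → ℤ)
    (i : Fin n → ZMod e) : CycHecke K tK n ℓ κ :=
  ∑ᶠ T : {T : StdTableau ℓ n // resSeq e κ T = i}, Fidem K tK n ℓ κ T.1

/-- The simultaneous two-sided eigenspace `H_{S,T}` of the Jucys–Murphy elements. -/
noncomputable def eigSub (K : Type*) [Field K] (tK : Kˣ) (n ℓ : ℕ) (κ : ℕ → ℤ)
    (S T : StdTableau ℓ n) : Submodule K (CycHecke K tK n ℓ κ) where
  carrier := {h | ∀ k : Fin n,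
      Lgen K tK n ℓ κ k * h = qint (tK : K) (content κ S (k.1 + 1)) • h ∧
      h * Lgen K tK n ℓ κ k = qint (tK : K) (content κ T (k.1 + 1)) • h}
  add_mem' := by
    intro a b ha hb
    intro k
    obtain ⟨h1, h2⟩ := ha k
    obtain ⟨h3, h4⟩ := hb k
    exact ⟨by rw [mul_add, h1, h3, smul_add], by rw [add_mul, h2, h4, smul_add]⟩
  zero_mem' := by intro k; simp
  smul_mem' := by
    intro c a ha
    intro k
    obtain ⟨h1, h2⟩ := ha k
    constructor
    · rw [mul_smul_comm, h1, smul_comm]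
    · rw [smul_mul_assoc, h2, smul_comm]

end Paper

/-! Over `K = F(q)` the seminormal forms make the functions on the standard tableaux of `λ` a module
for the Hecke algebra of type `A` with the Jucys–Murphy elements acting diagonally, provided the
charges are so far apart that contents separate tableaux.  The basis vectors are orthogonal for a
bilinear form which makes the generators self-adjoint, and at a place of `K` over `q = ζ_e` the norm
of the vector of `t` has valuation `deg_e(t)`.  Let `O` be the valuation ring of this place.  The
vector of the row reading tableau generates an `O`-lattice that is stable under the Hecke algebra
and contains a basis which is unitriangular with respect to the seminormal one.  A product of
differences of Jucys–Murphy elements and scalars maps the lattice into the line of its generator,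
and its eigenvalue there is the norm of the generator.  So the product of the generator with a
lattice vector `u` is the factor by which the generator is multiplied to give the image of `u`; it
is integral because the Hecke algebra is a finitely generated `O`-module.  The form is therefore
integral on the lattice, its Gram determinant, the product of all norms, lies in `O`, and the sum
of the degrees is nonnegative.  Degrees only depend on the charges modulo `e`, which allows to
move the charges apart, and the case `e = 0` agrees with that of any sufficiently large `e`. -/

namespace Paper

section HeckeTower

variable {α : Type*} [IdemSemiring α] {t : ℕ → α} {m : ℕ}

/-- For `t k` spanned by the `k`-th Hecke generator, the span of all words in the first `k`
generators. -/
def heckeTower (t : ℕ → α) : ℕ → α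
  | 0 => 1
  | k + 1 => heckeTower t k + heckeTower t k * t k * heckeTower t k

/-- The first `m` terms of `t` satisfy the type `A` Hecke relations up to lower order terms. -/
structure IsHeckeFamily (t : ℕ → α) (m : ℕ) : Prop where
  sq_le : ∀ k < m, t k * t k ≤ t k + 1
  braid : ∀ k, k + 1 < m → t (k + 1) * t k * t (k + 1) = t k * t (k + 1) * t k
  commute : ∀ i j, i + 1 < j → j < m → Commute (t i) (t j)

theorem heckeTower_le_succ (t : ℕ → α) (k : ℕ) : heckeTower t k ≤ heckeTower t (k + 1) :=
  le_self_add

theorem one_le_heckeTower (t : ℕ → α) : ∀ k, 1 ≤ heckeTower t k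
  | 0 => le_rfl
  | k + 1 => (one_le_heckeTower t k).trans (heckeTower_le_succ t k)

theorem mul_mul_le_heckeTower_succ (t : ℕ → α) (k : ℕ) :
    heckeTower t k * t k * heckeTower t k ≤ heckeTower t (k + 1) :=
  le_add_self

theorem le_heckeTower_of_lt {j k : ℕ} (h : j < k) : t j ≤ heckeTower t k := by
  induction k, h using Nat.le_induction with
  | base =>
    calc t j = 1 * t j * 1 := by simp
      _ ≤ heckeTower t j * t j * heckeTower t j := by gcongr <;> exact one_le_heckeTower t j
      _ ≤ heckeTower t (j + 1) := mul_mul_le_heckeTower_succ t j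
  | succ k _ ih => exact ih.trans (heckeTower_le_succ t k)

namespace IsHeckeFamily

variable (h : IsHeckeFamily t m)

include h

theorem commute_heckeTower {j k : ℕ} (hkj : k < j) (hj : j < m) :
    Commute (heckeTower t k) (t j) := by
  induction k with
  | zero => exact Commute.one_left _
  | succ k ih =>
    have ih := ih (by omega)
    exact ih.add_left ((ih.mul_left (h.commute k j hkj hj)).mul_left ih)

theorem mul_heckeTower_mul_le {k : ℕ} (hk : k < m)
    (hmul : heckeTower t k * heckeTower t k ≤ heckeTower t k) :
    t k * heckeTower t k * t k ≤ heckeTower t (k + 1) := by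
  have hone := one_le_heckeTower t k
  cases k with
  | zero =>
    calc t 0 * 1 * t 0 = t 0 * t 0 := by simp
      _ ≤ t 0 + 1 := h.sq_le 0 hk
      _ ≤ heckeTower t 1 := by simp [heckeTower, add_comm]
  | succ k =>
    set A := heckeTower t k
    set B := heckeTower t (k + 1)
    set s := t k
    set u := t (k + 1)
    have hAu : A * u = u * A := h.commute_heckeTower (Nat.lt_succ_self k) hk
    have hAB : A ≤ B := heckeTower_le_succ t k
    have hsB : s ≤ B := le_heckeTower_of_lt (Nat.lt_succ_self k)
    have hBu : B * u * 1 ≤ B * u * B := by gcongr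
    have hsu : A * s * u * (s * A) ≤ B * u * B := by
      have h1 : A * s ≤ B := (mul_le_mul' hAB hsB).trans hmul
      have h2 : s * A ≤ B := (mul_le_mul' hsB hAB).trans hmul
      gcongr
    calc u * B * u = u * (A + A * s * A) * u := rfl
      _ = (u * A) * u + (u * A) * s * (A * u) := by simp only [mul_add, add_mul, mul_assoc]
      _ = A * (u * u) + A * (u * s * u) * A := by rw [← hAu, hAu]; simp only [← hAu, mul_assoc]
      _ = A * (u * u) + A * s * u * (s * A) := by rw [h.braid k hk]; simp only [s, u, mul_assoc]
      _ ≤ B * (u + 1) + B * u * B := by gcongr; exact h.sq_le _ hk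
      _ ≤ B + B * u * B := by
        rw [mul_add, mul_one]
        exact add_le (add_le ((mul_one (B * u)).ge.trans (hBu.trans le_add_self)) le_self_add)
          le_add_self

theorem heckeTower_mul_self_le {k : ℕ} (hk : k ≤ m) :
    heckeTower t k * heckeTower t k ≤ heckeTower t k := by
  induction k with
  | zero => simp [heckeTower]
  | succ k ih =>
    have hmul := ih (by omega)
    have hkey := h.mul_heckeTower_mul_le hk hmul
    change _ ≤ heckeTower t k + heckeTower t k * t k * heckeTower t k at hkey
    change (heckeTower t k + heckeTower t k * t k * heckeTower t k) *
      (heckeTower t k + heckeTower t k * t k * heckeTower t k) ≤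
      heckeTower t k + heckeTower t k * t k * heckeTower t k
    set A := heckeTower t k
    set u := t k
    have h3 : A * (A * u * A) ≤ A + A * u * A :=
      calc A * (A * u * A) = A * A * u * A := by simp only [mul_assoc]
        _ ≤ A * u * A := by gcongr
        _ ≤ _ := le_add_self
    have h4 : A * u * A * A ≤ A + A * u * A :=
      calc A * u * A * A = A * u * (A * A) := by simp only [mul_assoc]
        _ ≤ A * u * A := by gcongr
        _ ≤ _ := le_add_self
    have h5 : A * u * A * (A * u * A) ≤ A + A * u * A :=
      calc A * u * A * (A * u * A) = A * (u * (A * A) * u) * A := by simp only [mul_assoc]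
        _ ≤ A * (u * A * u) * A := by gcongr
        _ ≤ A * (A + A * u * A) * A := by gcongr
        _ = A * A * A + (A * A) * u * (A * A) := by simp only [mul_add, add_mul, mul_assoc]
        _ ≤ A * A + A * u * A := by gcongr
        _ ≤ A + A * u * A := by gcongr
    rw [add_mul, mul_add, mul_add]
    exact add_le (add_le (hmul.trans le_self_add) h3) (add_le h4 h5)

end IsHeckeFamily

theorem heckeTower_fg {R A : Type*} [CommSemiring R] [Semiring A] [Algebra R A]
    {t : ℕ → Submodule R A} (ht : ∀ k, (t k).FG) : ∀ k, (heckeTower t k).FG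
  | 0 => by
    rw [heckeTower, Submodule.one_eq_span]
    exact Submodule.fg_span_singleton 1
  | k + 1 => (heckeTower_fg ht k).sup (((heckeTower_fg ht k).mul (ht k)).mul (heckeTower_fg ht k))

end HeckeTower

section Adjoin

variable {R A : Type*} [CommRing R] [Ring A] [Algebra R A] {T : ℕ → A} {m : ℕ}

theorem isHeckeFamily_span_singleton (sq : ∀ k < m, T k * T k ∈ Submodule.span R {T k, 1})
    (braid : ∀ k, k + 1 < m → T (k + 1) * T k * T (k + 1) = T k * T (k + 1) * T k)
    (commute : ∀ i j, i + 1 < j → j < m → Commute (T i) (T j)) :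
    IsHeckeFamily (fun k => Submodule.span R {T k}) m where
  sq_le k hk := by
    rw [Submodule.span_mul_span, Set.singleton_mul_singleton, Submodule.span_le,
      Set.singleton_subset_iff, Submodule.one_eq_span, Submodule.add_eq_sup,
      ← Submodule.span_union, Set.singleton_union]
    exact sq k hk
  braid k hk := by
    simp only [Submodule.span_mul_span, Set.singleton_mul_singleton, braid k hk]
  commute i j hij hj := by
    change _ * _ = _ * _
    simp only [Submodule.span_mul_span, Set.singleton_mul_singleton, (commute i j hij hj).eq]

theorem heckeTower_le_toSubmodule {t : ℕ → Submodule R A} {B : Subalgebra R A} {k : ℕ}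
    (h : ∀ j < k, t j ≤ B.toSubmodule) : heckeTower t k ≤ B.toSubmodule := by
  induction k with
  | zero => exact Submodule.one_le.mpr (one_mem B)
  | succ k ih =>
    have ih := ih fun j hj => h j (hj.trans (Nat.lt_succ_self k))
    refine sup_le ih ?_
    calc heckeTower t k * t k * heckeTower t k
        ≤ _ := mul_le_mul' (mul_le_mul' ih (h k (Nat.lt_succ_self k))) ih
      _ = B.toSubmodule := by simp only [B.isIdempotentElem_toSubmodule.eq]

theorem adjoin_toSubmodule_fg_of_hecke (sq : ∀ k < m, T k * T k ∈ Submodule.span R {T k, 1})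
    (braid : ∀ k, k + 1 < m → T (k + 1) * T k * T (k + 1) = T k * T (k + 1) * T k)
    (commute : ∀ i j, i + 1 < j → j < m → Commute (T i) (T j)) :
    (Algebra.adjoin R (T '' Set.Iio m)).toSubmodule.FG := by
  set t : ℕ → Submodule R A := fun k => Submodule.span R {T k}
  have hecke : IsHeckeFamily t m := isHeckeFamily_span_singleton sq braid commute
  have tower_le : heckeTower t m ≤ (Algebra.adjoin R (T '' Set.Iio m)).toSubmodule := by
    refine heckeTower_le_toSubmodule fun k hk => ?_
    rw [Submodule.span_singleton_le_iff_mem]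
    exact Algebra.subset_adjoin ⟨k, hk, rfl⟩
  have adjoin_le : (Algebra.adjoin R (T '' Set.Iio m)).toSubmodule ≤ heckeTower t m := by
    let H := (heckeTower t m).toSubalgebra (Submodule.one_le.mp (one_le_heckeTower t m))
      fun _ _ hx hy => hecke.heckeTower_mul_self_le le_rfl (Submodule.mul_mem_mul hx hy)
    refine Algebra.adjoin_le (S := H) ?_
    rintro _ ⟨k, hk, rfl⟩
    exact le_heckeTower_of_lt (t := t) hk (Submodule.mem_span_singleton_self _)
  rw [le_antisymm adjoin_le tower_le]
  exact heckeTower_fg (fun k => Submodule.fg_span_singleton _) m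

end Adjoin

section CyclicLattice

variable {O K V : Type*} [CommRing O] [Field K] [Algebra O K] [AddCommGroup V] [Module K V]
  [Module O V] [IsScalarTower O K V]

/-- The lattice `H v` generated by `v` under an `O`-algebra `H` of operators. -/
noncomputable def cyclicLattice (H : Subalgebra O (Module.End K V)) (v : V) : Submodule O V :=
  H.toSubmodule.map ((LinearMap.applyₗ v).restrictScalars O)

variable {H : Subalgebra O (Module.End K V)} {u v : V}

theorem self_mem_cyclicLattice : v ∈ cyclicLattice H v := ⟨1, one_mem H, rfl⟩

theorem apply_mem_cyclicLattice {g : Module.End K V} (hg : g ∈ H) (hu : u ∈ cyclicLattice H v) :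
    g u ∈ cyclicLattice H v := by
  obtain ⟨h, hh, rfl⟩ := hu
  exact ⟨g * h, H.mul_mem hg hh, rfl⟩

theorem cyclicLattice_adjoin_le {s : Set (Module.End K V)} {M : Submodule O V} (hv : v ∈ M)
    (hM : ∀ g ∈ s, ∀ u ∈ M, g u ∈ M) : cyclicLattice (Algebra.adjoin O s) v ≤ M := by
  rintro _ ⟨g, hg, rfl⟩
  suffices ∀ u ∈ M, g u ∈ M from this v hv
  induction hg using Algebra.adjoin_induction with
  | mem g hg => exact hM g hg
  | algebraMap c => exact fun u hu => M.smul_mem c hu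
  | add _ _ _ _ hg hh => exact fun u hu => M.add_mem (hg u hu) (hh u hu)
  | mul _ _ _ _ hg hh => exact fun u hu => hg _ (hh u hu)

theorem isIntegral_of_smul_mem_cyclicLattice (hH : H.toSubmodule.FG) (hv : v ≠ 0) {c : K}
    (hc : c • v ∈ cyclicLattice H v) : IsIntegral O c := by
  obtain ⟨g, hg, hgv⟩ := hc
  obtain ⟨p, hp, hpg⟩ := IsIntegral.of_mem_of_fg H hH g hg
  have heig : Module.End.HasEigenvector g c v := ⟨Module.End.mem_eigenspace_iff.mpr hgv, hv⟩
  have hpc : (p.map (algebraMap O K)).eval c • v = 0 := by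
    rw [← Module.End.aeval_apply_of_hasEigenvector heig, Polynomial.aeval_map_algebraMap,
      Polynomial.aeval_def, hpg, LinearMap.zero_apply]
  refine ⟨p, hp, ?_⟩
  rwa [Polynomial.eval_map, smul_eq_zero_iff_left hv] at hpc

end CyclicLattice

section GramDeterminant

open Matrix

variable {O K ι : Type*} [CommRing O] [Field K] [Algebra O K]

/-- This is where the lattice being cyclic is used: on `φ L ⊆ K v`, the form is determined by its
values at the generator. -/
theorem dotProduct_mem_range_of_cyclicLattice [Fintype ι] [DecidableEq ι] [IsIntegrallyClosedIn O K]
    {s : Set (Module.End K (ι → K))} (hs : (Algebra.adjoin O s).toSubmodule.FG) {i₀ : ι}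
    {γ φ : ι → K} (hφ : ∀ i ≠ i₀, φ i = 0) (hγφ : γ i₀ = φ i₀)
    (hφL : ∀ u ∈ cyclicLattice (Algebra.adjoin O s) (Pi.single i₀ 1),
      φ * u ∈ cyclicLattice (Algebra.adjoin O s) (Pi.single i₀ 1))
    (hadj : ∀ g ∈ s, ∀ u v, (γ * g u) ⬝ᵥ v = (γ * u) ⬝ᵥ g v) {u v : ι → K}
    (hu : u ∈ cyclicLattice (Algebra.adjoin O s) (Pi.single i₀ 1))
    (hv : v ∈ cyclicLattice (Algebra.adjoin O s) (Pi.single i₀ 1)) :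
    (γ * u) ⬝ᵥ v ∈ (algebraMap O K).range := by
  set L := cyclicLattice (Algebra.adjoin O s) (Pi.single i₀ (1 : K)) with hL
  let M : Submodule O (ι → K) :=
    { carrier := {u | ∀ v ∈ L, (γ * u) ⬝ᵥ v ∈ (algebraMap O K).range}
      add_mem' := fun {u w} hu hw v hv => by
        rw [mul_add, add_dotProduct]
        exact add_mem (hu v hv) (hw v hv)
      zero_mem' := fun v _ => by
        rw [mul_zero, zero_dotProduct]
        exact zero_mem _
      smul_mem' := fun c u hu v hv => by
        rw [mul_smul_comm, smul_dotProduct, Algebra.smul_def]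
        exact mul_mem ⟨c, rfl⟩ (hu v hv) }
  suffices L ≤ M from this hu v hv
  refine cyclicLattice_adjoin_le (fun v hv => ?_) fun g hg u hu v hv => ?_
  · have hproj : φ * v = (φ i₀ * v i₀) • Pi.single i₀ (1 : K) := by
      ext i
      obtain rfl | hi := eq_or_ne i i₀
      · simp
      · simp [hφ i hi, hi]
    have hform : (γ * Pi.single i₀ 1) ⬝ᵥ v = φ i₀ * v i₀ := by
      simp [dotProduct, Pi.single_apply, hγφ]
    rw [hform]
    refine IsIntegrallyClosedIn.isIntegral_iff.mp
      (isIntegral_of_smul_mem_cyclicLattice hs (v := Pi.single i₀ (1 : K)) (by simp) ?_)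
    rw [← hproj]
    exact hφL v hv
  · rw [hadj g hg]
    exact hu _ (apply_mem_cyclicLattice (Algebra.subset_adjoin hg) hv)

/-- The coordinate vector `w` has the basis vector at `i` as its leading term, for the order of the
basis given by `len`. -/
structure HasLeadingTerm (len : ι → ℕ) (w : ι → K) (i : ι) : Prop where
  apply_eq_one : w i = 1
  eq_or_lt_of_ne_zero : ∀ j, w j ≠ 0 → j = i ∨ len j < len i

theorem det_eq_one_of_hasLeadingTerm [DecidableEq ι] [Fintype ι] {len : ι → ℕ} {w : ι → ι → K}
    (hw : ∀ i, HasLeadingTerm len (w i) i) : (of w).det = 1 := by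
  have htri : (of w).BlockTriangular (OrderDual.toDual ∘ len) := fun i j hij => by
    by_contra hne
    obtain rfl | hlt := (hw i).eq_or_lt_of_ne_zero j hne
    · exact lt_irrefl _ hij
    · exact lt_asymm hlt hij
  rw [htri.det]
  refine Finset.prod_eq_one fun k _ => ?_
  suffices (of w).toSquareBlock (OrderDual.toDual ∘ len) k = 1 by rw [this, det_one]
  ext i j
  rw [toSquareBlock_def, of_apply, of_apply, one_apply]
  split_ifs with hij
  · rw [hij, (hw j).apply_eq_one]
  · by_contra hne
    have hlen : len i = len j := OrderDual.toDual_inj.mp (i.2.trans j.2.symm)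
    obtain heq | hlt := (hw i).eq_or_lt_of_ne_zero j hne
    · exact hij (Subtype.ext heq.symm)
    · omega

theorem prod_mem_range_of_hasLeadingTerm [Fintype ι] {γ : ι → K} {len : ι → ℕ} {w : ι → ι → K}
    (hγ : ∀ i j, (γ * w i) ⬝ᵥ w j ∈ (algebraMap O K).range)
    (hw : ∀ i, HasLeadingTerm len (w i) i) : ∏ i, γ i ∈ (algebraMap O K).range := by
  have hgram : ∀ i j, (of w * diagonal γ * (of w)ᵀ) i j = (γ * w i) ⬝ᵥ w j := fun i j => by
    rw [mul_apply, dotProduct]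
    simp [mul_diagonal, mul_comm]
  choose g hg using hγ
  refine ⟨(of g).det, ?_⟩
  calc algebraMap O K (of g).det = (of w * diagonal γ * (of w)ᵀ).det := by
        rw [RingHom.map_det]
        congr 1
        ext i j
        rw [hgram, ← hg]
        rfl
    _ = ∏ i, γ i := by
        rw [det_mul, det_mul, det_transpose, det_eq_one_of_hasLeadingTerm hw, det_diagonal,
          one_mul, mul_one]

end GramDeterminant

section Swap

variable {N : Type*}

/-- The sequence `a` with its terms at the places `r` and `r + 1` interchanged. -/
def swapAt (r : ℕ) (a : ℕ → N) : ℕ → N := a ∘ Equiv.swap r (r + 1)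

variable (r : ℕ) (a : ℕ → N)

@[simp] theorem swapAt_apply_left : swapAt r a r = a (r + 1) := by simp [swapAt]

@[simp] theorem swapAt_apply_right : swapAt r a (r + 1) = a r := by simp [swapAt]

theorem swapAt_apply_of_ne {r i : ℕ} (h : i ≠ r) (h' : i ≠ r + 1) : swapAt r a i = a i := by
  simp [swapAt, Equiv.swap_apply_of_ne_of_ne h h']

@[simp] theorem swapAt_swapAt : swapAt r (swapAt r a) = a := by
  ext1 i
  simp [swapAt]

/-- The permutation of `I` which swaps two neighbouring terms if the result is in `I` again. -/
noncomputable def swapOn (I : Set (ℕ → N)) (r : ℕ) (a : I) : I :=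
  if h : swapAt r a.1 ∈ I then ⟨swapAt r a.1, h⟩ else a

theorem swapOn_of_mem {I : Set (ℕ → N)} {r : ℕ} {a : I} (h : swapAt r a.1 ∈ I) :
    swapOn I r a = ⟨swapAt r a.1, h⟩ :=
  dif_pos h

theorem swapOn_of_notMem {I : Set (ℕ → N)} {r : ℕ} {a : I} (h : swapAt r a.1 ∉ I) :
    swapOn I r a = a :=
  dif_neg h

theorem swapOn_involutive (I : Set (ℕ → N)) (r : ℕ) : Function.Involutive (swapOn I r) := by
  intro a
  by_cases h : swapAt r a.1 ∈ I
  · have h' : swapAt r (⟨swapAt r a.1, h⟩ : I).1 ∈ I := by simp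
    rw [swapOn_of_mem h, swapOn_of_mem h']
    simp
  · rw [swapOn_of_notMem h, swapOn_of_notMem h]

theorem swapAt_comm {r s : ℕ} (h : r + 1 < s) :
    swapAt r (swapAt s a) = swapAt s (swapAt r a) := by
  ext1 i
  simp only [swapAt, Function.comp_apply, Equiv.swap_apply_def]
  congr 1
  split_ifs <;> omega

theorem swapAt_braid :
    swapAt r (swapAt (r + 1) (swapAt r a)) = swapAt (r + 1) (swapAt r (swapAt (r + 1) a)) := by
  ext1 i
  simp only [swapAt, Function.comp_apply, Equiv.swap_apply_def]
  congr 1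
  split_ifs <;> omega

end Swap

/-- The coefficients of a seminormal representation of the Hecke algebra with parameter `q`, for
which the node `A` has content `x A` and the off-diagonal coefficients are given by `β`. -/
structure SeminormalData (N K : Type*) [Field K] where
  q : K
  x : N → K
  β : N → N → K
  β_mul_β : ∀ A B, x A ≠ x B →
    β A B * β B A * (x A - x B) ^ 2 = (q * x A - x B) * (x A - q * x B)

namespace SeminormalData

variable {N K : Type*} [Field K] (S : SeminormalData N K)

/-- The diagonal coefficients of a seminormal representation. -/
def α (A B : N) : K := (S.q - 1) * S.x B / (S.x B - S.x A)

section Coefficients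

variable {S} {A B C : N}

theorem α_mul_sub (h : S.x A ≠ S.x B) :
    S.α A B * (S.x B - S.x A) = (S.q - 1) * S.x B :=
  div_mul_cancel₀ _ (sub_ne_zero.mpr h.symm)

theorem α_swap (h : S.x A ≠ S.x B) : S.α B A = S.q - 1 - S.α A B := by
  have h₁ := sub_ne_zero.mpr h
  have h₂ := sub_ne_zero.mpr h.symm
  unfold α
  field_simp
  ring

theorem β_mul_β_eq (h : S.x A ≠ S.x B) : S.β A B * S.β B A = S.q + S.α A B * S.α B A := by
  have h₁ := sub_ne_zero.mpr h
  have h₂ := sub_ne_zero.mpr h.symm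
  refine mul_right_cancel₀ (pow_ne_zero 2 h₁) ?_
  rw [S.β_mul_β A B h]
  unfold α
  field_simp
  ring

theorem α_mul_α_add (hAB : S.x A ≠ S.x B) (hBC : S.x B ≠ S.x C) (hAC : S.x A ≠ S.x C) :
    S.α A B * S.α B C + S.α A C * S.α B A = S.α B C * S.α A C := by
  have h₁ := sub_ne_zero.mpr hAB
  have h₂ := sub_ne_zero.mpr hAB.symm
  have h₃ := sub_ne_zero.mpr hAC.symm
  have h₄ := sub_ne_zero.mpr hBC.symm
  unfold α
  field_simp
  ring

end Coefficients

section Op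

/-- The seminormal operator `T_r`, acting on the functions on all sequences of nodes. -/
def op (r : ℕ) : Module.End K ((ℕ → N) → K) where
  toFun v a := S.α (a r) (a (r + 1)) * v a + S.β (a r) (a (r + 1)) * v (swapAt r a)
  map_add' u v := by
    ext1 a
    simp only [Pi.add_apply]
    ring
  map_smul' c v := by
    ext1 a
    simp only [Pi.smul_apply, smul_eq_mul, RingHom.id_apply]
    ring

theorem op_apply (r : ℕ) (v : (ℕ → N) → K) (a : ℕ → N) :
    S.op r v a = S.α (a r) (a (r + 1)) * v a + S.β (a r) (a (r + 1)) * v (swapAt r a) := rfl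

variable {S} {r s : ℕ} {a : ℕ → N} (v : (ℕ → N) → K)

theorem op_op_self_apply (h : S.x (a r) ≠ S.x (a (r + 1))) :
    S.op r (S.op r v) a = (S.q - 1) * S.op r v a + S.q * v a := by
  simp only [op_apply, swapAt_apply_left, swapAt_apply_right, swapAt_swapAt, α_swap h]
  linear_combination v a * β_mul_β_eq h + S.α (a r) (a (r + 1)) * v a * α_swap h

theorem op_op_comm_apply (h : r + 1 < s) : S.op r (S.op s v) a = S.op s (S.op r v) a := by
  have hr : swapAt s a r = a r := swapAt_apply_of_ne a (by omega) (by omega)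
  have hr' : swapAt s a (r + 1) = a (r + 1) := swapAt_apply_of_ne a (by omega) (by omega)
  have hs : swapAt r a s = a s := swapAt_apply_of_ne a (by omega) (by omega)
  have hs' : swapAt r a (s + 1) = a (s + 1) := swapAt_apply_of_ne a (by omega) (by omega)
  simp only [op_apply, hr, hr', hs, hs', swapAt_comm a h]
  ring

theorem op_braid_apply (h₁ : S.x (a r) ≠ S.x (a (r + 1)))
    (h₂ : S.x (a (r + 1)) ≠ S.x (a (r + 2))) (h₃ : S.x (a r) ≠ S.x (a (r + 2))) :
    S.op r (S.op (r + 1) (S.op r v)) a = S.op (r + 1) (S.op r (S.op (r + 1) v)) a := by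
  have e₁ : swapAt r a (r + 2) = a (r + 2) := swapAt_apply_of_ne a (by omega) (by omega)
  have e₂ : ∀ b : ℕ → N, swapAt (r + 1) b r = b r := fun b =>
    swapAt_apply_of_ne b (by omega) (by omega)
  have e₃ : ∀ b : ℕ → N, swapAt (r + 1) b (r + 2) = b (r + 1) := swapAt_apply_right (r + 1)
  have e₄ : swapAt r (swapAt (r + 1) a) (r + 2) = a (r + 1) := by
    rw [swapAt_apply_of_ne _ (by omega) (by omega), e₃]
  simp only [op_apply, swapAt_apply_left, swapAt_apply_right, swapAt_swapAt, e₁, e₂, e₄,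
    add_assoc, Nat.reduceAdd, swapAt_braid]
  have hα := α_mul_α_add h₁ h₂ h₃
  have hAB := β_mul_β_eq h₁
  have hBC := β_mul_β_eq h₂
  rw [α_swap h₁] at hα hAB ⊢
  rw [α_swap h₂] at hBC ⊢
  linear_combination (S.β (a r) (a (r + 1)) * v (swapAt r a)
      - S.β (a (r + 1)) (a (r + 2)) * v (swapAt (r + 1) a)
      + (S.α (a r) (a (r + 1)) - S.α (a (r + 1)) (a (r + 2))) * v a) * hα
    + S.α (a r) (a (r + 2)) * v a * (hAB - hBC)

end Op

variable {S} {I : Set (ℕ → N)} {m : ℕ}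

/-- The conditions under which `T_0, …, T_(m-1)` descend from the functions on all sequences to the
functions on `I`, and satisfy the Hecke relations there. -/
structure IsAdmissible (S : SeminormalData N K) (I : Set (ℕ → N)) (m : ℕ) : Prop where
  β_eq_zero : ∀ a ∈ I, ∀ r < m, swapAt r a ∉ I → S.β (a r) (a (r + 1)) = 0
  x_ne_x_add_one : ∀ a ∈ I, ∀ r < m, S.x (a r) ≠ S.x (a (r + 1))
  x_ne_x_add_two : ∀ a ∈ I, ∀ r, r + 1 < m → S.x (a r) ≠ S.x (a (r + 2))

/-- The seminormal operator `T_r`, acting on the functions on `I`. -/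
noncomputable def opOn (S : SeminormalData N K) (I : Set (ℕ → N)) (r : ℕ) :
    Module.End K (I → K) :=
  LinearMap.funLeft K K Subtype.val ∘ₗ S.op r ∘ₗ Function.ExtendByZero.linearMap K Subtype.val

theorem opOn_apply_of_mem (r : ℕ) (u : I → K) (a : I) (h : swapAt r a.1 ∈ I) :
    S.opOn I r u a =
      S.α (a.1 r) (a.1 (r + 1)) * u a + S.β (a.1 r) (a.1 (r + 1)) * u ⟨swapAt r a.1, h⟩ := by
  have h₁ := Subtype.val_injective.extend_apply u 0 a
  have h₂ := Subtype.val_injective.extend_apply u 0 ⟨swapAt r a.1, h⟩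
  change S.α _ _ * Function.extend _ _ _ _ + S.β _ _ * Function.extend _ _ _ _ = _
  rw [h₁, h₂]

namespace IsAdmissible

theorem opOn_comp_val (hI : S.IsAdmissible I m) {r : ℕ} (hr : r < m) (v : (ℕ → N) → K) :
    S.opOn I r (v ∘ Subtype.val) = S.op r v ∘ Subtype.val := by
  ext a
  by_cases h : swapAt r a.1 ∈ I
  · rw [opOn_apply_of_mem r _ a h]
    rfl
  · have hβ := hI.β_eq_zero a.1 a.2 r hr h
    have h₁ := Subtype.val_injective.extend_apply (v ∘ Subtype.val) 0 a
    change S.α _ _ * Function.extend _ _ _ _ + S.β _ _ * _ = S.α _ _ * _ + S.β _ _ * _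
    rw [h₁, hβ, zero_mul, zero_mul]
    rfl

theorem opOn_apply_of_notMem (hI : S.IsAdmissible I m) {r : ℕ} (hr : r < m) (u : I → K) (a : I)
    (h : swapAt r a.1 ∉ I) : S.opOn I r u a = S.α (a.1 r) (a.1 (r + 1)) * u a := by
  obtain ⟨v, rfl⟩ := Subtype.val_injective.surjective_comp_right u
  rw [hI.opOn_comp_val hr, Function.comp_apply, op_apply, hI.β_eq_zero a.1 a.2 r hr h, zero_mul,
    add_zero]
  rfl

theorem opOn_mul_self (hI : S.IsAdmissible I m) {r : ℕ} (hr : r < m) :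
    S.opOn I r * S.opOn I r = (S.q - 1) • S.opOn I r + S.q • 1 := by
  refine LinearMap.ext fun u => ?_
  obtain ⟨v, rfl⟩ := Subtype.val_injective.surjective_comp_right u
  ext a
  simp only [Module.End.mul_apply, LinearMap.add_apply, LinearMap.smul_apply, Pi.add_apply,
    Pi.smul_apply, Module.End.one_apply, smul_eq_mul, hI.opOn_comp_val hr, Function.comp_apply]
  exact op_op_self_apply v (hI.x_ne_x_add_one a.1 a.2 r hr)

theorem opOn_commute (hI : S.IsAdmissible I m) {r s : ℕ} (h : r + 1 < s) (hs : s < m) :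
    Commute (S.opOn I r) (S.opOn I s) := by
  refine LinearMap.ext fun u => ?_
  obtain ⟨v, rfl⟩ := Subtype.val_injective.surjective_comp_right u
  ext a
  simp only [Module.End.mul_apply, hI.opOn_comp_val hs, hI.opOn_comp_val (r := r) (by omega),
    Function.comp_apply]
  exact op_op_comm_apply v h

theorem opOn_braid (hI : S.IsAdmissible I m) {r : ℕ} (hr : r + 1 < m) :
    S.opOn I (r + 1) * S.opOn I r * S.opOn I (r + 1) =
      S.opOn I r * S.opOn I (r + 1) * S.opOn I r := by
  refine LinearMap.ext fun u => ?_
  obtain ⟨v, rfl⟩ := Subtype.val_injective.surjective_comp_right u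
  ext a
  simp only [Module.End.mul_apply, hI.opOn_comp_val hr, hI.opOn_comp_val (r := r) (by omega),
    Function.comp_apply]
  exact (op_braid_apply v (hI.x_ne_x_add_one a.1 a.2 r (by omega))
    (hI.x_ne_x_add_one a.1 a.2 (r + 1) hr) (hI.x_ne_x_add_two a.1 a.2 r hr)).symm

end IsAdmissible

/-- The eigenvalues of the Jucys–Murphy operator `X_j` on the functions on `I`. -/
def jucysMurphy (S : SeminormalData N K) (I : Set (ℕ → N)) (j : ℕ) : I → K := fun a => S.x (a.1 j)

namespace IsAdmissible

theorem jucysMurphy_mul_opOn_succ (hI : S.IsAdmissible I m) {r : ℕ} (hr : r < m) (u : I → K) :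
    S.jucysMurphy I (r + 1) * S.opOn I r u =
      S.opOn I r (S.jucysMurphy I r * u) + (S.q - 1) • (S.jucysMurphy I (r + 1) * u) := by
  ext a
  have hα := α_mul_sub (hI.x_ne_x_add_one a.1 a.2 r hr)
  by_cases h : swapAt r a.1 ∈ I
  · simp only [Pi.mul_apply, Pi.add_apply, Pi.smul_apply, smul_eq_mul, jucysMurphy,
      opOn_apply_of_mem r _ a h, swapAt_apply_left]
    linear_combination u a * hα
  · simp only [Pi.mul_apply, Pi.add_apply, Pi.smul_apply, smul_eq_mul, jucysMurphy,
      hI.opOn_apply_of_notMem hr _ a h]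
    linear_combination u a * hα

theorem jucysMurphy_mul_opOn_self (hI : S.IsAdmissible I m) {r : ℕ} (hr : r < m) (u : I → K) :
    S.jucysMurphy I r * S.opOn I r u =
      S.opOn I r (S.jucysMurphy I (r + 1) * u) - (S.q - 1) • (S.jucysMurphy I (r + 1) * u) := by
  ext a
  have hα := α_mul_sub (hI.x_ne_x_add_one a.1 a.2 r hr)
  by_cases h : swapAt r a.1 ∈ I
  · simp only [Pi.mul_apply, Pi.sub_apply, Pi.smul_apply, smul_eq_mul, jucysMurphy,
      opOn_apply_of_mem r _ a h, swapAt_apply_right]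
    linear_combination -u a * hα
  · simp only [Pi.mul_apply, Pi.sub_apply, Pi.smul_apply, smul_eq_mul, jucysMurphy,
      hI.opOn_apply_of_notMem hr _ a h]
    linear_combination -u a * hα

theorem jucysMurphy_mul_opOn_of_ne (hI : S.IsAdmissible I m) {j r : ℕ} (hr : r < m) (h : j ≠ r)
    (h' : j ≠ r + 1) (u : I → K) :
    S.jucysMurphy I j * S.opOn I r u = S.opOn I r (S.jucysMurphy I j * u) := by
  ext a
  by_cases hs : swapAt r a.1 ∈ I
  · simp only [Pi.mul_apply, jucysMurphy, opOn_apply_of_mem r _ a hs, swapAt_apply_of_ne _ h h']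
    ring
  · simp only [Pi.mul_apply, jucysMurphy, hI.opOn_apply_of_notMem hr _ a hs]
    ring

theorem opOn_apply (hI : S.IsAdmissible I m) {r : ℕ} (hr : r < m) (u : I → K) (a : I) :
    S.opOn I r u a =
      S.α (a.1 r) (a.1 (r + 1)) * u a + S.β (a.1 r) (a.1 (r + 1)) * u (swapOn I r a) := by
  by_cases h : swapAt r a.1 ∈ I
  · rw [opOn_apply_of_mem r u a h, swapOn_of_mem h]
  · rw [hI.opOn_apply_of_notMem hr u a h, hI.β_eq_zero a.1 a.2 r hr h, zero_mul, add_zero]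

theorem dotProduct_opOn [Fintype I] (hI : S.IsAdmissible I m) {r : ℕ} (hr : r < m)
    {γ : (ℕ → N) → K} (hγ : ∀ a ∈ I, swapAt r a ∈ I →
      γ a * S.β (a r) (a (r + 1)) = γ (swapAt r a) * S.β (a (r + 1)) (a r)) (u v : I → K) :
    (γ ∘ Subtype.val * S.opOn I r u) ⬝ᵥ v = (γ ∘ Subtype.val * u) ⬝ᵥ S.opOn I r v := by
  let c : I → K := fun a => γ a.1 * S.β (a.1 r) (a.1 (r + 1))
  have hc : ∀ a : I, c a = c (swapOn I r a) := fun a => by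
    by_cases h : swapAt r a.1 ∈ I
    · simp only [c, swapOn_of_mem h, hγ a.1 a.2 h, swapAt_apply_left, swapAt_apply_right]
    · rw [swapOn_of_notMem h]
  have hoff : ∑ a : I, c a * u (swapOn I r a) * v a = ∑ a : I, c a * u a * v (swapOn I r a) := by
    rw [← Equiv.sum_comp (swapOn_involutive I r).toPerm]
    refine Finset.sum_congr rfl fun a _ => ?_
    rw [Function.Involutive.coe_toPerm, swapOn_involutive I r a, ← hc a]
  calc (γ ∘ Subtype.val * S.opOn I r u) ⬝ᵥ v
      = ∑ a : I, γ a.1 * S.α (a.1 r) (a.1 (r + 1)) * u a * v a +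
          ∑ a : I, c a * u (swapOn I r a) * v a := by
        rw [← Finset.sum_add_distrib, dotProduct]
        refine Finset.sum_congr rfl fun a _ => ?_
        rw [Pi.mul_apply, hI.opOn_apply hr, Function.comp_apply]
        ring
    _ = (γ ∘ Subtype.val * u) ⬝ᵥ S.opOn I r v := by
        rw [hoff, ← Finset.sum_add_distrib, dotProduct]
        refine Finset.sum_congr rfl fun a _ => ?_
        rw [Pi.mul_apply, hI.opOn_apply hr, Function.comp_apply]
        ring

variable {O : Type*} [CommRing O] [Algebra O K]

theorem adjoin_opOn_fg (hI : S.IsAdmissible I m) (hq : S.q ∈ (algebraMap O K).range) :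
    (Algebra.adjoin O (S.opOn I '' Set.Iio m)).toSubmodule.FG := by
  obtain ⟨q, hq⟩ := hq
  refine adjoin_toSubmodule_fg_of_hecke (fun r hr => ?_) (fun r hr => hI.opOn_braid hr)
    fun r s hrs hs => hI.opOn_commute hrs hs
  refine Submodule.mem_span_pair.mpr ⟨q - 1, q, ?_⟩
  rw [hI.opOn_mul_self hr, ← hq, ← algebraMap_smul K (q - 1), ← algebraMap_smul K q, map_sub,
    map_one]

theorem jucysMurphy_mul_mem (hI : S.IsAdmissible I m) (hq : S.q ∈ (algebraMap O K).range)
    (hx : ∀ A, S.x A ∈ (algebraMap O K).range) (a₀ : I) (j : ℕ) {u : I → K}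
    (hu : u ∈ cyclicLattice (Algebra.adjoin O (S.opOn I '' Set.Iio m)) (Pi.single a₀ 1)) :
    S.jucysMurphy I j * u ∈
      cyclicLattice (Algebra.adjoin O (S.opOn I '' Set.Iio m)) (Pi.single a₀ 1) := by
  set L := cyclicLattice (Algebra.adjoin O (S.opOn I '' Set.Iio m)) (Pi.single a₀ (1 : K)) with hL
  let M : Submodule O (I → K) :=
    L ⊓ ⨅ j, L.comap (LinearMap.mulLeft O (S.jucysMurphy I j))
  have mem_M : ∀ {u}, u ∈ M ↔ u ∈ L ∧ ∀ j, S.jucysMurphy I j * u ∈ L := by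
    intro u
    simp [M]
  suffices L ≤ M from (mem_M.mp (this hu)).2 j
  have smul_mem : ∀ {c : K}, c ∈ (algebraMap O K).range → ∀ {u}, u ∈ L → c • u ∈ L := by
    rintro _ ⟨c, rfl⟩ u hu
    rw [algebraMap_smul]
    exact L.smul_mem c hu
  have op_mem : ∀ {r}, r < m → ∀ {u}, u ∈ L → S.opOn I r u ∈ L := fun hr _ hu =>
    apply_mem_cyclicLattice (Algebra.subset_adjoin (Set.mem_image_of_mem _ hr)) hu
  have hq' : S.q - 1 ∈ (algebraMap O K).range := sub_mem hq (one_mem _)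
  refine cyclicLattice_adjoin_le (mem_M.mpr ⟨self_mem_cyclicLattice, fun j => ?_⟩) ?_
  · have : S.jucysMurphy I j * Pi.single a₀ 1 = S.x (a₀.1 j) • Pi.single a₀ (1 : K) := by
      ext a
      obtain rfl | h := eq_or_ne a a₀
      · simp [jucysMurphy]
      · simp [h]
    rw [this]
    exact smul_mem (hx _) self_mem_cyclicLattice
  · rintro _ ⟨r, hr, rfl⟩ u hu
    obtain ⟨hu, hXu⟩ := mem_M.mp hu
    refine mem_M.mpr ⟨op_mem hr hu, fun j => ?_⟩
    by_cases h : j = r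
    · rw [h, hI.jucysMurphy_mul_opOn_self hr]
      exact sub_mem (op_mem hr (hXu _)) (smul_mem hq' (hXu _))
    by_cases h' : j = r + 1
    · rw [h', hI.jucysMurphy_mul_opOn_succ hr]
      exact add_mem (op_mem hr (hXu _)) (smul_mem hq' (hXu _))
    · rw [hI.jucysMurphy_mul_opOn_of_ne hr h h']
      exact op_mem hr (hXu j)

theorem prod_sub_mul_mem (hI : S.IsAdmissible I m) (hq : S.q ∈ (algebraMap O K).range)
    (hx : ∀ A, S.x A ∈ (algebraMap O K).range) (a₀ : I) (P : Finset (Σ _ : ℕ, N)) {u : I → K}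
    (hu : u ∈ cyclicLattice (Algebra.adjoin O (S.opOn I '' Set.Iio m)) (Pi.single a₀ 1)) :
    (∏ p ∈ P, fun a : I => S.x (a.1 p.1) - S.x p.2) * u ∈
      cyclicLattice (Algebra.adjoin O (S.opOn I '' Set.Iio m)) (Pi.single a₀ 1) := by
  induction P using Finset.induction_on with
  | empty => simpa using hu
  | insert p P hp ih =>
    obtain ⟨c, hc⟩ := hx p.2
    rw [Finset.prod_insert hp, mul_assoc]
    convert sub_mem (hI.jucysMurphy_mul_mem hq hx a₀ p.1 ih) (Submodule.smul_mem _ c ih) using 1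
    ext a
    rw [Pi.sub_apply, Pi.smul_apply, Algebra.smul_def, hc]
    simp only [Pi.mul_apply, jucysMurphy]
    ring

theorem hasLeadingTerm_opOn (hI : S.IsAdmissible I m) {len : (ℕ → N) → ℕ} {r : ℕ} (hr : r < m)
    (hlen : ∀ a ∈ I, len a ≤ len (swapAt r a) + 1) {a : I} (hs : swapAt r a.1 ∈ I)
    (hβ : S.β (a.1 r) (a.1 (r + 1)) = 1) (hla : len a = len (swapAt r a) + 1) {w : I → K}
    (hw : HasLeadingTerm (len ∘ Subtype.val) w ⟨swapAt r a.1, hs⟩) :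
    HasLeadingTerm (len ∘ Subtype.val) (S.opOn I r w) a := by
  have hw₀ : ∀ b : I, w b ≠ 0 → len b < len a := fun b hb => by
    obtain rfl | hlt := hw.eq_or_lt_of_ne_zero b hb
    · exact hla ▸ Nat.lt_succ_self _
    · exact hlt.trans (hla ▸ Nat.lt_succ_self _)
  have hwa : w a = 0 := by
    by_contra h
    exact lt_irrefl _ (hw₀ a h)
  refine ⟨?_, fun b hb => ?_⟩
  · rw [opOn_apply_of_mem r w a hs, hβ, hw.apply_eq_one, hwa, mul_zero, zero_add, mul_one]
  obtain hwb | hwb := ne_or_eq (w b) 0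
  · exact Or.inr (hw₀ b hwb)
  rw [hI.opOn_apply hr, hwb, mul_zero, zero_add] at hb
  have hwsb := right_ne_zero_of_mul hb
  by_cases hsb : swapAt r b.1 ∈ I
  · rw [swapOn_of_mem hsb] at hwsb
    obtain heq | hlt := hw.eq_or_lt_of_ne_zero _ hwsb
    · refine Or.inl ?_
      simpa [Subtype.ext_iff] using congrArg (swapAt r ∘ Subtype.val) heq
    · have := hlen b.1 b.2
      simp only [Function.comp_apply] at hlt ⊢
      omega
  · rw [swapOn_of_notMem hsb] at hwsb
    exact absurd hwb hwsb

theorem exists_mem_hasLeadingTerm (hI : S.IsAdmissible I m) {len : (ℕ → N) → ℕ}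
    (hlen : ∀ a ∈ I, ∀ r < m, len a ≤ len (swapAt r a) + 1) {a₀ : I}
    (hdesc : ∀ a : I, a ≠ a₀ → ∃ r < m, swapAt r a.1 ∈ I ∧ S.β (a.1 r) (a.1 (r + 1)) = 1 ∧
      len a = len (swapAt r a) + 1) (a : I) :
    ∃ w ∈ cyclicLattice (Algebra.adjoin O (S.opOn I '' Set.Iio m)) (Pi.single a₀ 1),
      HasLeadingTerm (len ∘ Subtype.val) w a := by
  obtain ⟨d, hd⟩ : ∃ d, len a = d := ⟨_, rfl⟩
  induction d using Nat.strong_induction_on generalizing a with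
  | _ d ih =>
    obtain rfl | ha := eq_or_ne a a₀
    · refine ⟨Pi.single a 1, self_mem_cyclicLattice, by simp, fun b hb => Or.inl ?_⟩
      by_contra h
      exact hb (Pi.single_eq_of_ne h _)
    obtain ⟨r, hr, hs, hβ, hla⟩ := hdesc a ha
    obtain ⟨w, hw, hwa⟩ := ih (len (swapAt r a.1)) (by omega) ⟨swapAt r a.1, hs⟩ rfl
    exact ⟨S.opOn I r w,
      apply_mem_cyclicLattice (Algebra.subset_adjoin (Set.mem_image_of_mem _ hr)) hw,
      hI.hasLeadingTerm_opOn hr (fun b hb => hlen b hb r hr) hs hβ hla hwa⟩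

theorem prod_mem_range [IsIntegrallyClosedIn O K] [Fintype I] (hI : S.IsAdmissible I m)
    (hq : S.q ∈ (algebraMap O K).range) (hx : ∀ A, S.x A ∈ (algebraMap O K).range)
    {γ : (ℕ → N) → K} (hγ : ∀ r < m, ∀ a ∈ I, swapAt r a ∈ I →
      γ a * S.β (a r) (a (r + 1)) = γ (swapAt r a) * S.β (a (r + 1)) (a r))
    {len : (ℕ → N) → ℕ} (hlen : ∀ a ∈ I, ∀ r < m, len a ≤ len (swapAt r a) + 1) {a₀ : I}
    (hdesc : ∀ a : I, a ≠ a₀ → ∃ r < m, swapAt r a.1 ∈ I ∧ S.β (a.1 r) (a.1 (r + 1)) = 1 ∧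
      len a = len (swapAt r a) + 1)
    {P : Finset (Σ _ : ℕ, N)} (hP : ∀ a : I, a ≠ a₀ → ∃ p ∈ P, S.x (a.1 p.1) = S.x p.2)
    (hγ₀ : γ a₀ = ∏ p ∈ P, (S.x (a₀.1 p.1) - S.x p.2)) :
    ∏ a : I, γ a ∈ (algebraMap O K).range := by
  choose w hw hwa using hI.exists_mem_hasLeadingTerm (O := O) hlen hdesc
  refine prod_mem_range_of_hasLeadingTerm (γ := γ ∘ Subtype.val) (fun a b => ?_) hwa
  refine dotProduct_mem_range_of_cyclicLattice (hI.adjoin_opOn_fg hq)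
    (φ := ∏ p ∈ P, fun a : I => S.x (a.1 p.1) - S.x p.2) (fun a ha => ?_) ?_
    (fun u hu => hI.prod_sub_mul_mem hq hx a₀ P hu) ?_ (hw a) (hw b)
  · obtain ⟨p, hp, hpa⟩ := hP a ha
    rw [Finset.prod_apply]
    exact Finset.prod_eq_zero hp (sub_eq_zero.mpr hpa)
  · rw [Finset.prod_apply]
    exact hγ₀
  · rintro _ ⟨r, hr, rfl⟩ u v
    exact hI.dotProduct_opOn hr (hγ r hr) u v

end IsAdmissible

end SeminormalData

section Diagram

/-- The content `κ_l + c - r` of the node `(l, r, c)`. -/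
def nodeContent (κ : ℕ → ℤ) (A : Node) : ℤ := κ A.1 + A.2.2 - A.2.1

/-- The order on the nodes in which standard tableaux increase: `A` lies weakly to the north-west of
`B`, in the same component. -/
def NodeLE (A B : Node) : Prop := A.1 = B.1 ∧ A.2 ≤ B.2

/-- The length of a row of a diagram. -/
noncomputable def rowLen (S : Set Node) (l r : ℕ) : ℕ := sInf {c | (l, r, c) ∉ S}

/-- The first node in a row that does not belong to the diagram. -/
noncomputable def rowEnd (S : Set Node) (l r : ℕ) : Node := (l, r, rowLen S l r)

theorem nodeBelow_irrefl (A : Node) : ¬ nodeBelow A A := by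
  simp [nodeBelow]

theorem nodeBelow_asymm {A B : Node} (h : nodeBelow A B) : ¬ nodeBelow B A := by
  unfold nodeBelow at *
  omega

theorem nodeBelow_trans {A B C : Node} (h : nodeBelow A B) (h' : nodeBelow B C) :
    nodeBelow A C := by
  unfold nodeBelow at *
  omega

theorem nodeBelow_or_nodeBelow {A B : Node} (h : A ≠ B) : nodeBelow A B ∨ nodeBelow B A := by
  simp only [nodeBelow, ne_eq, Prod.ext_iff] at *
  omega

theorem NodeLE.nodeBelow {A B : Node} (h : NodeLE A B) (hne : A ≠ B) : nodeBelow A B := by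
  simp only [NodeLE, Paper.nodeBelow, ne_eq, Prod.ext_iff, Prod.le_def] at *
  omega

theorem rowLen_congr {S S' : Set Node} {l r : ℕ} (h : ∀ c, (l, r, c) ∈ S ↔ (l, r, c) ∈ S') :
    rowLen S l r = rowLen S' l r := by
  simp only [rowLen, h]

theorem rowLen_insert_of_ne {S : Set Node} {A : Node} {l r : ℕ} (h : ¬ (l = A.1 ∧ r = A.2.1)) :
    rowLen (insert A S) l r = rowLen S l r :=
  rowLen_congr fun c => by
    rw [Set.mem_insert_iff, or_iff_right]
    rintro rfl
    exact h ⟨rfl, rfl⟩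

namespace IsDiagramSet

variable {ℓ : ℕ} {S : Set Node} {A : Node} {l r c : ℕ}

theorem mem_of_nodeLE (hS : IsDiagramSet ℓ S) {B : Node} (hAB : NodeLE A B) (hB : B ∈ S) :
    A ∈ S := by
  obtain ⟨-, -, hrow, hcol⟩ := hS
  obtain ⟨l, r, c⟩ := A
  obtain ⟨l', r', c'⟩ := B
  obtain ⟨rfl, hr, hc⟩ : l = l' ∧ r ≤ r' ∧ c ≤ c' := hAB
  have hB' : (l, r, c') ∈ S := Nat.decreasingInduction (fun k _ => hcol l k c') hB hr
  exact Nat.decreasingInduction (fun k _ => hrow l r k) hB' hc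

theorem mem_iff_lt_rowLen (hS : IsDiagramSet ℓ S) : (l, r, c) ∈ S ↔ c < rowLen S l r := by
  have hfin : {c | (l, r, c) ∈ S}.Finite :=
    hS.1.preimage (Function.Injective.injOn fun c c' h => by simpa using h)
  have hend : (l, r, rowLen S l r) ∉ S := Nat.sInf_mem hfin.infinite_compl.nonempty
  refine ⟨fun h => ?_, fun h => not_not.mp (Nat.notMem_of_lt_sInf h)⟩
  by_contra hc
  exact hend (hS.mem_of_nodeLE (B := (l, r, c))
    ⟨rfl, Prod.mk_le_mk.mpr ⟨le_rfl, not_lt.mp hc⟩⟩ h)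

theorem rowLen_antitone (hS : IsDiagramSet ℓ S) (l : ℕ) : Antitone (rowLen S l) := by
  intro r r' hr
  by_contra! h
  exact lt_irrefl _ (hS.mem_iff_lt_rowLen.mp
    (hS.mem_of_nodeLE (A := (l, r, rowLen S l r)) (B := (l, r', rowLen S l r))
      ⟨rfl, Prod.mk_le_mk.mpr ⟨hr, le_rfl⟩⟩ (hS.mem_iff_lt_rowLen.mpr h)))

theorem rowLen_eq_zero (hS : IsDiagramSet ℓ S) (h : (l, r, 0) ∉ S) : rowLen S l r = 0 := by
  rwa [hS.mem_iff_lt_rowLen, not_lt, Nat.le_zero] at h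

theorem insert_iff (hS : IsDiagramSet ℓ S) : IsDiagramSet ℓ (insert (l, r, c) S) ↔
    l < ℓ ∧ c ≤ rowLen S l r ∧ (r = 0 ∨ c < rowLen S l (r - 1)) := by
  simp only [← hS.mem_iff_lt_rowLen]
  constructor
  · rintro ⟨-, hl, hrow, hcol⟩
    refine ⟨hl _ (Set.mem_insert _ _), ?_, ?_⟩
    · obtain _ | c := c
      · exact Nat.zero_le _
      · simpa [hS.mem_iff_lt_rowLen] using hrow l r c (Set.mem_insert _ _)
    · obtain _ | r := r
      · exact Or.inl rfl
      · simpa using hcol l r c (Set.mem_insert _ _)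
  · rintro ⟨hl, hc, hr⟩
    obtain ⟨hfin, hlt, hrow, hcol⟩ := hS
    refine ⟨hfin.insert _, ?_, fun l' r' c' h => ?_, fun l' r' c' h => ?_⟩
    · rintro A (rfl | hA)
      exacts [hl, hlt A hA]
    · rcases h with h | h
      · obtain ⟨rfl, rfl, rfl⟩ : l' = l ∧ r' = r ∧ c' + 1 = c := by simpa using h
        exact Or.inr (mem_iff_lt_rowLen ⟨hfin, hlt, hrow, hcol⟩ |>.mpr hc)
      · exact Or.inr (hrow _ _ _ h)
    · rcases h with h | h
      · obtain ⟨rfl, rfl, rfl⟩ : l' = l ∧ r' + 1 = r ∧ c' = c := by simpa using h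
        exact Or.inr (hr.resolve_left r'.succ_ne_zero)
      · exact Or.inr (hcol _ _ _ h)

theorem addable_iff (hS : IsDiagramSet ℓ S) : Addable ℓ S (l, r, c) ↔
    l < ℓ ∧ c = rowLen S l r ∧ (r = 0 ∨ rowLen S l r < rowLen S l (r - 1)) := by
  rw [Addable, Set.union_singleton, hS.insert_iff, hS.mem_iff_lt_rowLen]
  grind

theorem removable_iff (hS : IsDiagramSet ℓ S) : Removable ℓ S (l, r, c) ↔
    c + 1 = rowLen S l r ∧ rowLen S l (r + 1) < rowLen S l r := by
  suffices Removable ℓ S (l, r, c) ↔ (l, r, c) ∈ S ∧ (l, r, c + 1) ∉ S ∧ (l, r + 1, c) ∉ S by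
    simp only [this, hS.mem_iff_lt_rowLen]
    omega
  refine and_congr_right fun _ => ⟨fun h => ⟨fun h' => ?_, fun h' => ?_⟩, fun h => ?_⟩
  · exact (h.2.2.1 l r c ⟨h', by simp⟩).2 rfl
  · exact (h.2.2.2 l r c ⟨h', by simp⟩).2 rfl
  · refine ⟨hS.1.sdiff, fun A hA => hS.2.1 A hA.1, fun l' r' c' h' => ?_, fun l' r' c' h' => ?_⟩
    · refine ⟨hS.2.2.1 _ _ _ h'.1, ?_⟩
      rintro ⟨⟩
      exact h.1 h'.1
    · refine ⟨hS.2.2.2 _ _ _ h'.1, ?_⟩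
      rintro ⟨⟩
      exact h.2 h'.1

theorem rowLen_insert (hS : IsDiagramSet ℓ S) (hAS : IsDiagramSet ℓ (insert A S)) (hA : A ∉ S) :
    A.2.2 = rowLen S A.1 A.2.1 ∧ rowLen (insert A S) A.1 A.2.1 = rowLen S A.1 A.2.1 + 1 := by
  obtain ⟨l, r, c⟩ := A
  have hc : c = rowLen S l r :=
    ((hS.addable_iff (ℓ := ℓ)).mp ⟨hA, by rwa [Set.union_singleton]⟩).2.1
  refine ⟨hc, le_antisymm ?_ (hAS.mem_iff_lt_rowLen.mp (hc ▸ Set.mem_insert _ _))⟩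
  have h : (l, r, rowLen S l r + 1) ∉ insert (l, r, c) S := by
    simp [hS.mem_iff_lt_rowLen, hc]
  exact not_lt.mp fun h' => h (hAS.mem_iff_lt_rowLen.mpr h')

end IsDiagramSet

end Diagram

section StandardSequences

/-- The set of the first `k` terms of `a`: the shape of the first `k` entries of a tableau. -/
def initialShape {N : Type*} (a : ℕ → N) (k : ℕ) : Set N := a '' Set.Iio k

section

variable {N : Type*} (a : ℕ → N)

theorem initialShape_succ (k : ℕ) : initialShape a (k + 1) = insert (a k) (initialShape a k) := by
  rw [initialShape, initialShape, ← Set.image_insert_eq, ← Order.succ_eq_add_one,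
    Order.Iio_succ_eq_insert]

theorem initialShape_swapAt {r k : ℕ} (h : k ≠ r + 1) :
    initialShape (swapAt r a) k = initialShape a k := by
  have : Equiv.swap r (r + 1) '' Set.Iio k = Set.Iio k := by
    rw [Equiv.image_eq_preimage_symm, Equiv.symm_swap]
    ext i
    simp only [Set.mem_preimage, Set.mem_Iio, Equiv.swap_apply_def]
    split_ifs <;> omega
  rw [initialShape, swapAt, Set.image_comp, this, initialShape]

theorem finite_initialShape (k : ℕ) : (initialShape a k).Finite := (Set.finite_Iio k).image a

@[to_additive]
theorem prod_initialShape_swapAt {M : Type*} [CommMonoid M] (F : Set N → N → M) {n r : ℕ}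
    (hr : r + 1 < n) :
    (∏ k ∈ Finset.range n, F (initialShape (swapAt r a) k) (swapAt r a k)) *
        (F (initialShape a r) (a r) * F (insert (a r) (initialShape a r)) (a (r + 1))) =
      (∏ k ∈ Finset.range n, F (initialShape a k) (a k)) *
        (F (initialShape a r) (a (r + 1)) *
          F (insert (a (r + 1)) (initialShape a r)) (a r)) := by
  have hsub : {r, r + 1} ⊆ Finset.range n := by
    intro k
    simp only [Finset.mem_insert, Finset.mem_singleton, Finset.mem_range]
    omega
  have hpair : ∀ f : ℕ → M, ∏ k ∈ {r, r + 1}, f k = f r * f (r + 1) := fun f =>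
    Finset.prod_pair r.succ_ne_self.symm
  have hrest : ∏ k ∈ Finset.range n \ {r, r + 1}, F (initialShape (swapAt r a) k) (swapAt r a k) =
      ∏ k ∈ Finset.range n \ {r, r + 1}, F (initialShape a k) (a k) := by
    refine Finset.prod_congr rfl fun k hk => ?_
    simp only [Finset.mem_sdiff, Finset.mem_insert, Finset.mem_singleton, not_or] at hk
    rw [initialShape_swapAt a hk.2.2, swapAt_apply_of_ne a hk.2.1 hk.2.2]
  simp only [← Finset.prod_sdiff hsub, hrest, hpair, initialShape_succ, swapAt_apply_left,
    swapAt_apply_right, initialShape_swapAt a r.succ_ne_self.symm]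
  ac_rfl

end

/-- `a` lists the nodes of the diagram `Λ` of size `n` in the order of the entries of a standard
tableau; it is extended by zero to become a sequence. -/
structure IsStandardSeq (n : ℕ) (Λ : Set Node) (a : ℕ → Node) : Prop where
  eq_zero : ∀ i, n ≤ i → a i = 0
  bijOn : Set.BijOn a (Set.Iio n) Λ
  le_of_nodeLE : ∀ i j, i < n → j < n → NodeLE (a i) (a j) → i ≤ j

variable {n ℓ : ℕ} {Λ : Set Node} {a : ℕ → Node} {i j k r : ℕ}

namespace IsStandardSeq

theorem eq_iff (ha : IsStandardSeq n Λ a) (hi : i < n) (hj : j < n) : a i = a j ↔ i = j :=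
  ha.bijOn.injOn.eq_iff hi hj

theorem notMem_initialShape (ha : IsStandardSeq n Λ a) (hi : i < n) (hk : k ≤ i) :
    a i ∉ initialShape a k := by
  rintro ⟨j, hj, hji⟩
  rw [Set.mem_Iio] at hj
  have := (ha.eq_iff (by omega) hi).mp hji
  omega

theorem isDiagramSet_initialShape (ha : IsStandardSeq n Λ a) (hΛ : IsDiagramSet ℓ Λ) (hk : k ≤ n) :
    IsDiagramSet ℓ (initialShape a k) := by
  have hmem : ∀ {j}, j < k → a j ∈ Λ := fun hj => ha.bijOn.mapsTo (lt_of_lt_of_le hj hk)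
  have hle : ∀ {A B}, NodeLE A B → A ∈ Λ → B ∈ initialShape a k → A ∈ initialShape a k := by
    rintro A _ hAB hA ⟨j, hj, rfl⟩
    obtain ⟨i, hi, rfl⟩ := ha.bijOn.surjOn hA
    exact ⟨i, (ha.le_of_nodeLE i j hi (lt_of_lt_of_le hj hk) hAB).trans_lt hj, rfl⟩
  have hsub : initialShape a k ⊆ Λ := by
    rintro _ ⟨j, hj, rfl⟩
    exact hmem hj
  obtain ⟨-, hlt, hrow, hcol⟩ := hΛ
  refine ⟨finite_initialShape a k, fun A hA => hlt A (hsub hA), fun l r c h => ?_,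
    fun l r c h => ?_⟩
  · exact hle (B := (l, r, c + 1)) ⟨rfl, le_rfl, Nat.le_succ c⟩ (hrow l r c (hsub h)) h
  · exact hle (B := (l, r + 1, c)) ⟨rfl, Nat.le_succ r, le_rfl⟩ (hcol l r c (hsub h)) h

theorem swapAt (ha : IsStandardSeq n Λ a) (hr : r + 1 < n) (h : ¬ NodeLE (a r) (a (r + 1))) :
    IsStandardSeq n Λ (swapAt r a) where
  eq_zero i hi := by
    rw [swapAt_apply_of_ne a (by omega) (by omega), ha.eq_zero i hi]
  bijOn := by
    refine ha.bijOn.comp (Equiv.bijOn _ fun i => ?_)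
    simp only [Set.mem_Iio, Equiv.swap_apply_def]
    split_ifs <;> omega
  le_of_nodeLE i j hi hj hij := by
    have hσ : ∀ {i}, i < n → Equiv.swap r (r + 1) i < n := fun {i} hi => by
      rw [Equiv.swap_apply_def]
      split_ifs <;> omega
    have hle := ha.le_of_nodeLE _ _ (hσ hi) (hσ hj) hij
    by_contra! hji
    obtain ⟨rfl, rfl⟩ : i = r + 1 ∧ j = r := by
      simp only [Equiv.swap_apply_def] at hle
      split_ifs at hle <;> omega
    simp only [swapAt_apply_left, swapAt_apply_right] at hij
    exact h hij

theorem swapAt_of_nodeBelow (ha : IsStandardSeq n Λ a) (hr : r + 1 < n)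
    (h : nodeBelow (a (r + 1)) (a r)) : IsStandardSeq n Λ (Paper.swapAt r a) :=
  ha.swapAt hr fun h' => nodeBelow_asymm h
    (h'.nodeBelow fun heq => r.succ_ne_self ((ha.eq_iff (by omega) hr).mp heq).symm)

theorem exists_eq_of_nodeLE (ha : IsStandardSeq n Λ a) (hΛ : IsDiagramSet ℓ Λ) (hi : i < n)
    (hj : j < n) {C : Node} (hC : NodeLE (a i) C) (hC' : NodeLE C (a j)) :
    ∃ k, i ≤ k ∧ k ≤ j ∧ a k = C := by
  obtain ⟨k, hk, rfl⟩ := ha.bijOn.surjOn (hΛ.mem_of_nodeLE hC' (ha.bijOn.mapsTo hj))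
  exact ⟨k, ha.le_of_nodeLE i k hi hk hC, ha.le_of_nodeLE k j hk hj hC', rfl⟩

theorem nodeContent_eq_of_nodeLE (ha : IsStandardSeq n Λ a) (hΛ : IsDiagramSet ℓ Λ)
    (hr : r + 1 < n) (h : NodeLE (a r) (a (r + 1))) (κ : ℕ → ℤ) :
    nodeContent κ (a (r + 1)) = nodeContent κ (a r) + 1 ∨
      nodeContent κ (a (r + 1)) = nodeContent κ (a r) - 1 := by
  have hne : a r ≠ a (r + 1) := fun heq => r.succ_ne_self ((ha.eq_iff (by omega) hr).mp heq).symm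
  have eq_of_nodeLE : ∀ {C}, NodeLE (a r) C → NodeLE C (a (r + 1)) → C ≠ a r →
      C = a (r + 1) := fun hC hC' hCr => by
    obtain ⟨k, hrk, hkr, rfl⟩ := ha.exists_eq_of_nodeLE hΛ (by omega) hr hC hC'
    rw [(by grind : k = r + 1)]
  generalize a r = A, a (r + 1) = B at h hne eq_of_nodeLE ⊢
  obtain ⟨l, i, c⟩ := A
  obtain ⟨l', i', c'⟩ := B
  obtain ⟨rfl, hi, hc⟩ : l = l' ∧ i ≤ i' ∧ c ≤ c' := h
  rcases hc.lt_or_eq with hc' | rfl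
  · left
    rw [← eq_of_nodeLE (C := (l, i, c + 1)) ⟨rfl, le_rfl, Nat.le_succ c⟩ ⟨rfl, hi, hc'⟩ (by simp)]
    simp only [nodeContent, Nat.cast_add, Nat.cast_one]
    ring
  · right
    have hi' : i < i' := lt_of_le_of_ne hi (by rintro rfl; exact hne rfl)
    rw [← eq_of_nodeLE (C := (l, i + 1, c)) ⟨rfl, Nat.le_succ i, le_rfl⟩ ⟨rfl, hi', hc⟩ (by simp)]
    simp only [nodeContent, Nat.cast_add, Nat.cast_one]
    ring

/-- A standard tableau has at least two entries strictly between two consecutive entries on a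
diagonal, namely those of the two neighbours which both nodes share. -/
theorem nodeContent_ne (ha : IsStandardSeq n Λ a) (hΛ : IsDiagramSet ℓ Λ) (κ : ℕ → ℤ) (hij : i < j)
    (hji : j ≤ i + 2) (hj : j < n) (h : (a i).1 = (a j).1) :
    nodeContent κ (a i) ≠ nodeContent κ (a j) := by
  intro hcont
  have hi : i < n := by omega
  have hnle : ¬ NodeLE (a j) (a i) := fun h => by
    have := ha.le_of_nodeLE j i hj hi h
    omega
  have hne : a i ≠ a j := fun h => by
    have := (ha.eq_iff hi hj).mp h
    omega
  have hlt : (a i).2.1 < (a j).2.1 ∧ (a i).2.2 < (a j).2.2 := by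
    simp only [NodeLE, Prod.le_def, nodeContent, ne_eq, Prod.ext_iff, h, true_and] at hnle hcont hne
    omega
  obtain ⟨k, hik, hkj, hk⟩ := ha.exists_eq_of_nodeLE hΛ hi hj
    (C := ((a i).1, (a i).2.1 + 1, (a i).2.2)) ⟨rfl, Nat.le_succ _, le_rfl⟩ ⟨h, hlt.1, hlt.2.le⟩
  obtain ⟨k', hik', hkj', hk'⟩ := ha.exists_eq_of_nodeLE hΛ hi hj
    (C := ((a i).1, (a i).2.1, (a i).2.2 + 1)) ⟨rfl, le_rfl, Nat.le_succ _⟩ ⟨h, hlt.1.le, hlt.2⟩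
  simp only [Prod.ext_iff] at hk hk'
  have : k ≠ k' := by
    rintro rfl
    omega
  have : k ≠ i ∧ k ≠ j ∧ k' ≠ i ∧ k' ≠ j := by
    refine ⟨?_, ?_, ?_, ?_⟩ <;> rintro rfl <;> omega
  omega

end IsStandardSeq

theorem finite_setOf_isStandardSeq (hΛ : Λ.Finite) : {a | IsStandardSeq n Λ a}.Finite := by
  refine Set.Finite.of_injOn (f := fun a (i : Fin n) => a i) (t := Set.univ.pi fun _ => Λ)
    (fun a ha i _ => ha.bijOn.mapsTo i.2) (fun a ha b hb hab => funext fun i => ?_)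
    (Set.Finite.pi fun _ => hΛ)
  by_cases hi : i < n
  · exact congrFun hab ⟨i, hi⟩
  · rw [ha.eq_zero i (not_lt.mp hi), hb.eq_zero i (not_lt.mp hi)]

end StandardSequences

section RowReading

/-- The number of inversions of a sequence of nodes with respect to the lexicographic order. -/
noncomputable def inversionCount (n : ℕ) (a : ℕ → Node) : ℕ :=
  ∑ k ∈ Finset.range n, {B ∈ initialShape a k | nodeBelow (a k) B}.ncard

/-- The node one row down from `A` if `l` is the component of `A`, and the corner of the component
`l` otherwise, provided that this component comes after `A`. -/
def firstNodeBelow (A : Node) (l : ℕ) : Node := (l, if l = A.1 then A.2.1 + 1 else 0, 0)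

variable {n ℓ : ℕ} {Λ : Set Node} {a a₀ : ℕ → Node} {r : ℕ}

namespace IsStandardSeq

theorem inversionCount_swapAt (ha : IsStandardSeq n Λ a) (hr : r + 1 < n)
    (h : nodeBelow (a r) (a (r + 1))) :
    inversionCount n (Paper.swapAt r a) = inversionCount n a + 1 := by
  have hsum := sum_initialShape_swapAt a (fun S A => {B ∈ S | nodeBelow A B}.ncard) hr
  have hadd : {B ∈ insert (a r) (initialShape a r) | nodeBelow (a (r + 1)) B} =
      {B ∈ initialShape a r | nodeBelow (a (r + 1)) B} := by
    ext B
    have := nodeBelow_asymm h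
    simp only [Set.mem_ofPred_eq, Set.mem_insert_iff]
    grind
  have hins : {B ∈ insert (a (r + 1)) (initialShape a r) | nodeBelow (a r) B} =
      insert (a (r + 1)) {B ∈ initialShape a r | nodeBelow (a r) B} := by
    ext B
    simp only [Set.mem_ofPred_eq, Set.mem_insert_iff]
    grind
  have hnot : a (r + 1) ∉ {B ∈ initialShape a r | nodeBelow (a r) B} := fun h =>
    ha.notMem_initialShape hr r.le_succ h.1
  rw [hadd, hins, Set.ncard_insert_of_notMem hnot ((finite_initialShape a r).sep _)] at hsum
  unfold inversionCount
  omega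

theorem inversionCount_eq_of_nodeBelow (ha : IsStandardSeq n Λ a) (hr : r + 1 < n)
    (h : nodeBelow (a (r + 1)) (a r)) :
    inversionCount n a = inversionCount n (Paper.swapAt r a) + 1 := by
  simpa using (ha.swapAt_of_nodeBelow hr h).inversionCount_swapAt hr (by simpa using h)

theorem inversionCount_le (ha : IsStandardSeq n Λ a) (hr : r + 1 < n) :
    inversionCount n a ≤ inversionCount n (Paper.swapAt r a) + 1 := by
  have hne : a r ≠ a (r + 1) := fun h => r.succ_ne_self ((ha.eq_iff (by omega) hr).mp h).symm
  rcases nodeBelow_or_nodeBelow hne with h | h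
  · rw [ha.inversionCount_swapAt hr h]
    omega
  · rw [ha.inversionCount_eq_of_nodeBelow hr h]

end IsStandardSeq

/-- `a` lists the nodes of its diagram row by row: it comes from the initial tableau. -/
def IsRowReading (n : ℕ) (a : ℕ → Node) : Prop := ∀ r, r + 1 < n → nodeBelow (a r) (a (r + 1))

theorem exists_isRowReading (h : ∃ a, IsStandardSeq n Λ a) :
    ∃ a, IsStandardSeq n Λ a ∧ IsRowReading n a := by
  obtain ⟨a, ha, hmin⟩ := exists_minimalFor_of_wellFoundedLT (IsStandardSeq n Λ)
    (inversionCount n) h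
  refine ⟨a, ha, fun r hr => ?_⟩
  have hne : a r ≠ a (r + 1) := fun h => r.succ_ne_self ((ha.eq_iff (by omega) hr).mp h).symm
  refine (nodeBelow_or_nodeBelow hne).resolve_right fun h => ?_
  have := hmin (ha.swapAt_of_nodeBelow hr h)
  have := ha.inversionCount_eq_of_nodeBelow hr h
  omega

namespace IsRowReading

theorem nodeBelow (ha : IsRowReading n a) {i j : ℕ} (hij : i < j) (hj : j < n) :
    nodeBelow (a i) (a j) := by
  induction j, hij using Nat.le_induction with
  | base => exact ha i hj
  | succ j _ ih => exact nodeBelow_trans (ih (by omega)) (ha j hj)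

theorem exists_eq_and_nodeBelow (h₀ : IsRowReading n a₀) (ha₀ : IsStandardSeq n Λ a₀)
    (ha : IsStandardSeq n Λ a) (hne : a ≠ a₀) :
    ∃ k < n, (∀ i < k, a i = a₀ i) ∧ Paper.nodeBelow (a₀ k) (a k) := by
  have hex : ∃ k, a k ≠ a₀ k := by
    by_contra! h
    exact hne (funext h)
  classical
  have hk := Nat.find_spec hex
  have heq : ∀ i < Nat.find hex, a i = a₀ i := fun i hi => not_not.mp (Nat.find_min hex hi)
  generalize Nat.find hex = k at hk heq
  have hkn : k < n := by
    by_contra! h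
    rw [ha.eq_zero k h, ha₀.eq_zero k h] at hk
    exact hk rfl
  obtain ⟨j, hj, hjk⟩ := ha₀.bijOn.surjOn (ha.bijOn.mapsTo hkn)
  refine ⟨k, hkn, heq, hjk ▸ h₀.nodeBelow (lt_of_le_of_ne ?_ ?_) hj⟩
  · by_contra! hlt
    have := (ha.eq_iff (hlt.trans hkn) hkn).mp ((heq j hlt).trans hjk)
    omega
  · rintro rfl
    exact hk hjk.symm

theorem eq (h₀ : IsRowReading n a₀) (ha₀ : IsStandardSeq n Λ a₀) (h : IsRowReading n a)
    (ha : IsStandardSeq n Λ a) : a = a₀ := by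
  by_contra hne
  obtain ⟨k, -, heq, hbelow⟩ := h₀.exists_eq_and_nodeBelow ha₀ ha hne
  obtain ⟨k', -, heq', hbelow'⟩ := h.exists_eq_and_nodeBelow ha ha₀ (Ne.symm hne)
  rcases lt_trichotomy k k' with hlt | rfl | hlt
  · rw [heq' k hlt] at hbelow
    exact nodeBelow_irrefl _ hbelow
  · exact nodeBelow_asymm hbelow hbelow'
  · rw [heq k' hlt] at hbelow'
    exact nodeBelow_irrefl _ hbelow'

theorem exists_nodeBelow (h₀ : IsRowReading n a₀) (ha₀ : IsStandardSeq n Λ a₀)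
    (ha : IsStandardSeq n Λ a) (hne : a ≠ a₀) :
    ∃ r, r + 1 < n ∧ Paper.nodeBelow (a (r + 1)) (a r) := by
  by_contra! h
  refine hne (h₀.eq ha₀ (fun r hr => ?_) ha)
  exact (nodeBelow_or_nodeBelow fun heq =>
    r.succ_ne_self ((ha.eq_iff (by omega) hr).mp heq).symm).resolve_right (h r hr)

theorem exists_eq_firstNodeBelow (h₀ : IsRowReading n a₀) (ha₀ : IsStandardSeq n Λ a₀)
    (hΛ : IsDiagramSet ℓ Λ) (ha : IsStandardSeq n Λ a) (hne : a ≠ a₀) :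
    ∃ k < n, ∃ l ∈ Finset.Ico (a₀ k).1 ℓ, a k = firstNodeBelow (a₀ k) l := by
  obtain ⟨k, hk, heq, hbelow⟩ := h₀.exists_eq_and_nodeBelow ha₀ ha hne
  have hak : a k ∈ Λ := ha.bijOn.mapsTo hk
  have nodeBelow_of_nodeLE : ∀ C, NodeLE C (a k) → C ≠ a k → Paper.nodeBelow C (a₀ k) :=
    fun C hC hCk => by
      obtain ⟨i, hi, rfl⟩ := ha.bijOn.surjOn (hΛ.mem_of_nodeLE hC hak)
      have hik : i < k := lt_of_le_of_ne (ha.le_of_nodeLE i k hi hk hC)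
        (by rintro rfl; exact hCk rfl)
      exact heq i hik ▸ h₀.nodeBelow hik hk
  have hℓ : (a k).1 < ℓ := hΛ.2.1 _ hak
  refine ⟨k, hk, (a k).1, ?_⟩
  generalize a k = A, a₀ k = A₀ at *
  obtain ⟨l, i, c⟩ := A
  have hc : c = 0 := by
    by_contra hc
    have := nodeBelow_of_nodeLE (l, i, c - 1) ⟨rfl, le_rfl, Nat.sub_le c 1⟩ (by simp; omega)
    simp only [Paper.nodeBelow] at this hbelow
    omega
  have hi : i = 0 ∨ Paper.nodeBelow (l, i - 1, c) A₀ := or_iff_not_imp_left.mpr fun hi =>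
    nodeBelow_of_nodeLE (l, i - 1, c) ⟨rfl, Nat.sub_le i 1, le_rfl⟩ (by simp; omega)
  simp only [Paper.nodeBelow, firstNodeBelow, Finset.mem_Ico, Prod.ext_iff, true_and]
    at hℓ hbelow hi ⊢
  split_ifs <;> omega

end IsRowReading

end RowReading

section RowsBelow

/-- The charges are so far apart that the contents occurring in different components of a
multipartition of `n` lie in disjoint intervals, which descend from one component to the next. -/
def IsSeparated (n : ℕ) (κ : ℕ → ℤ) : Prop := ∀ l l', l < l' → κ l' + 2 * n < κ l

/-- The rows of a multipartition of `n` with `ℓ` components below the row of `A`. -/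
def rowsBelow (ℓ n : ℕ) (A : Node) : Finset (Σ _ : ℕ, ℕ) :=
  (Finset.Ico A.1 ℓ).sigma fun l => Finset.Ico (firstNodeBelow A l).2.1 n

variable {ℓ n : ℕ} {κ : ℕ → ℤ} {S : Set Node} {A B : Node} {l r : ℕ}

theorem mem_rowsBelow {p : Σ _ : ℕ, ℕ} :
    p ∈ rowsBelow ℓ n A ↔ p.1 < ℓ ∧ p.2 < n ∧ nodeBelow A (p.1, p.2, 0) := by
  simp only [rowsBelow, firstNodeBelow, Finset.mem_sigma, Finset.mem_Ico, nodeBelow]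
  split_ifs <;> omega

theorem IsSeparated.nodeContent_lt (hκ : IsSeparated n κ) (hAB : A.1 < B.1) (hA : A.2.1 ≤ n)
    (hB : B.2.2 ≤ n) : nodeContent κ B < nodeContent κ A := by
  have := hκ _ _ hAB
  unfold nodeContent
  omega

theorem IsSeparated.nodeContent_lt_of_nodeBelow (hκ : IsSeparated n κ) (hA : A.2.1 ≤ n)
    (h : nodeBelow A (l, r, 0)) : nodeContent κ (l, r, 0) < nodeContent κ A := by
  obtain hl | ⟨rfl, hr⟩ : A.1 < l ∨ A.1 = l ∧ A.2.1 < r := by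
    simp only [nodeBelow] at h
    omega
  · exact hκ.nodeContent_lt hl hA (Nat.zero_le n)
  · simp only [nodeContent]
    omega

namespace IsDiagramSet

theorem lt_ncard (hS : IsDiagramSet ℓ S) (hA : A ∈ S) : A.2.1 < S.ncard ∧ A.2.2 < S.ncard := by
  have lt_of_forall_mem : ∀ (f : ℕ → Node) (i : ℕ), f.Injective → (∀ j ≤ i, f j ∈ S) →
      i < S.ncard := fun f i hf h => by
    have hsub : f '' Set.Iic i ⊆ S := Set.image_subset_iff.mpr h
    have := Set.ncard_le_ncard hsub hS.1
    rw [Set.ncard_image_of_injective _ hf, ← Finset.coe_Iic, Set.ncard_coe_finset,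
      Nat.card_Iic] at this
    omega
  constructor
  · exact lt_of_forall_mem (fun j => (A.1, j, A.2.2)) _ (fun i j h => by simpa using h)
      fun j hj => hS.mem_of_nodeLE (B := A) ⟨rfl, Prod.mk_le_mk.mpr ⟨hj, le_rfl⟩⟩ hA
  · exact lt_of_forall_mem (fun j => (A.1, A.2.1, j)) _ (fun i j h => by simpa using h)
      fun j hj => hS.mem_of_nodeLE (B := A) ⟨rfl, Prod.mk_le_mk.mpr ⟨le_rfl, hj⟩⟩ hA

theorem rowLen_le_ncard (hS : IsDiagramSet ℓ S) (l r : ℕ) : rowLen S l r ≤ S.ncard := by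
  by_contra! h
  exact lt_irrefl _ (hS.lt_ncard (hS.mem_iff_lt_rowLen.mpr h)).2

theorem nodeContent_rowEnd_lt (hS : IsDiagramSet ℓ S) (hn : S.ncard ≤ n) (hκ : IsSeparated n κ)
    (hA : Removable ℓ S A) (h : nodeBelow A (l, r, 0)) :
    nodeContent κ (rowEnd S l r) < nodeContent κ A := by
  have hAn := (hS.lt_ncard hA.1).1
  obtain hl | ⟨rfl, hr⟩ : A.1 < l ∨ A.1 = l ∧ A.2.1 < r := by
    simp only [nodeBelow] at h
    omega
  · exact hκ.nodeContent_lt hl (by omega) ((hS.rowLen_le_ncard l r).trans hn)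
  · obtain ⟨hc, hlt⟩ : A.2.2 + 1 = rowLen S A.1 A.2.1 ∧
        rowLen S A.1 (A.2.1 + 1) < rowLen S A.1 A.2.1 := hS.removable_iff.mp hA
    have : rowLen S A.1 r ≤ rowLen S A.1 (A.2.1 + 1) := hS.rowLen_antitone A.1 hr
    simp only [nodeContent, rowEnd]
    omega

end IsDiagramSet

theorem ncard_insert_initialShape_le {k : ℕ} (a : ℕ → Node) (hk : k < n) :
    (insert (a k) (initialShape a k)).ncard ≤ n := by
  rw [← initialShape_succ, initialShape, ← Finset.coe_Iio]
  refine (Set.ncard_image_le (Finset.finite_toSet _)).trans ?_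
  rwa [Set.ncard_coe_finset, Nat.card_Iio]

namespace IsStandardSeq

variable {Λ : Set Node} {a : ℕ → Node} {i j k : ℕ}

theorem isDiagramSet_insert (ha : IsStandardSeq n Λ a) (hΛ : IsDiagramSet ℓ Λ) (hk : k < n) :
    IsDiagramSet ℓ (insert (a k) (initialShape a k)) :=
  initialShape_succ a k ▸ ha.isDiagramSet_initialShape hΛ hk

theorem rowLen_insert (ha : IsStandardSeq n Λ a) (hΛ : IsDiagramSet ℓ Λ) (hk : k + 1 < n) :
    (a (k + 1)).2.2 = rowLen (insert (a k) (initialShape a k)) (a (k + 1)).1 (a (k + 1)).2.1 ∧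
      rowLen (insert (a (k + 1)) (insert (a k) (initialShape a k))) (a (k + 1)).1 (a (k + 1)).2.1 =
        rowLen (insert (a k) (initialShape a k)) (a (k + 1)).1 (a (k + 1)).2.1 + 1 := by
  rw [← initialShape_succ]
  exact (ha.isDiagramSet_initialShape hΛ hk.le).rowLen_insert (ha.isDiagramSet_insert hΛ hk)
    (ha.notMem_initialShape hk le_rfl)

theorem removable (ha : IsStandardSeq n Λ a) (hΛ : IsDiagramSet ℓ Λ) (hk : k < n) :
    Removable ℓ (insert (a k) (initialShape a k)) (a k) := by
  refine ⟨Set.mem_insert _ _, ?_⟩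
  rw [Set.insert_sdiff_self_of_notMem (ha.notMem_initialShape hk le_rfl)]
  exact ha.isDiagramSet_initialShape hΛ hk.le

theorem ncard_eq (ha : IsStandardSeq n Λ a) : Λ.ncard = n := by
  rw [← ha.bijOn.image_eq, ha.bijOn.injOn.ncard_image, ← Finset.coe_Iio,
    Set.ncard_coe_finset, Nat.card_Iio]

theorem lt_of_lt (ha : IsStandardSeq n Λ a) (hΛ : IsDiagramSet ℓ Λ) (hk : k < n) :
    (a k).2.1 < n ∧ (a k).2.2 < n :=
  ha.ncard_eq ▸ hΛ.lt_ncard (ha.bijOn.mapsTo hk)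

theorem nodeBelow_row (hs : IsStandardSeq n Λ (Paper.swapAt k a)) (hk : k + 1 < n)
    (h : nodeBelow (a k) (a (k + 1))) :
    nodeBelow (a k) ((a (k + 1)).1, (a (k + 1)).2.1, 0) := by
  have hle : ¬ NodeLE (a k) (a (k + 1)) := fun hle => by
    have := hs.le_of_nodeLE (k + 1) k hk (by omega) (by simpa using hle)
    omega
  simp only [NodeLE, Prod.le_def] at hle
  simp only [nodeBelow] at h ⊢
  omega

theorem nodeContent_succ_lt (ha : IsStandardSeq n Λ a) (hΛ : IsDiagramSet ℓ Λ)
    (hκ : IsSeparated n κ) (hk : k + 1 < n) (h : nodeBelow (a k) (a (k + 1)))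
    (hs : IsStandardSeq n Λ (Paper.swapAt k a)) :
    nodeContent κ (a (k + 1)) < nodeContent κ (a k) := by
  have hk' : k < n := by omega
  have := (ha.isDiagramSet_insert hΛ hk').nodeContent_rowEnd_lt
    (ncard_insert_initialShape_le a hk') hκ (ha.removable hΛ hk') (hs.nodeBelow_row hk h)
  rwa [rowEnd, ← (ha.rowLen_insert hΛ hk).1] at this

theorem nodeContent_ne_of_isSeparated (ha : IsStandardSeq n Λ a) (hΛ : IsDiagramSet ℓ Λ)
    (hκ : IsSeparated n κ) (hij : i < j) (hji : j ≤ i + 2) (hj : j < n) :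
    nodeContent κ (a i) ≠ nodeContent κ (a j) := by
  have hi := ha.lt_of_lt hΛ (hij.trans hj)
  have hj' := ha.lt_of_lt hΛ hj
  rcases lt_trichotomy (a i).1 (a j).1 with h | h | h
  · exact (hκ.nodeContent_lt h hi.1.le hj'.2.le).ne'
  · exact ha.nodeContent_ne hΛ κ hij hji hj h
  · exact (hκ.nodeContent_lt h hj'.1.le hi.2.le).ne

end IsStandardSeq

end RowsBelow

section NodeNorm

variable {K : Type*} [Field K] (q : K) (κ : ℕ → ℤ)

/-- The value `q ^ content` which a Jucys–Murphy element takes at the node `A`. -/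
def nodeValue (A : Node) : K := q ^ nodeContent κ A

/-- The product of the two off-diagonal coefficients of a seminormal representation. -/
def swapRatio (A B : Node) : K :=
  (q * nodeValue q κ A - nodeValue q κ B) * (nodeValue q κ A - q * nodeValue q κ B) /
    (nodeValue q κ A - nodeValue q κ B) ^ 2

/-- The seminormal coefficients with parameter `q`, normalized such that a step towards the
row reading of a diagram has coefficient `1`. -/
noncomputable def seminormal : SeminormalData Node K where
  q := q
  x := nodeValue q κ
  β A B := if nodeBelow B A then 1 else swapRatio q κ A B
  β_mul_β A B h := by
    have hsub := sub_ne_zero.mpr h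
    have hsub' := sub_ne_zero.mpr h.symm
    have hne : A ≠ B := by
      rintro rfl
      exact h rfl
    unfold swapRatio
    rcases nodeBelow_or_nodeBelow hne with hAB | hAB
    · simp only [hAB, nodeBelow_asymm hAB, if_true, if_false]
      field_simp
    · simp only [hAB, nodeBelow_asymm hAB, if_true, if_false]
      field_simp
      ring

/-- The contribution of one row of `S` to the norm of a node `A` above it. -/
noncomputable def rowFactor (S : Set Node) (A : Node) (l r : ℕ) : K :=
  q ^ rowLen S l r * (nodeValue q κ A - q ^ nodeContent κ (rowEnd S l r)) /
    (nodeValue q κ A - q ^ (nodeContent κ (rowEnd S l r) - 1))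

/-- The contribution of the node `A`, which is the last one added to reach the shape `S`, to the
norms of the seminormal basis vectors. -/
noncomputable def nodeNorm (ℓ n : ℕ) (S : Set Node) (A : Node) : K :=
  (∏ p ∈ rowsBelow ℓ n A, rowFactor q κ S A p.1 p.2) *
    ∏ l ∈ Finset.Ico A.1 ℓ, (nodeValue q κ A - nodeValue q κ (l, n, 0))

/-- The norm of the seminormal basis vector which corresponds to the sequence `a`. -/
noncomputable def seqNorm (ℓ n : ℕ) (a : ℕ → Node) : K :=
  ∏ k ∈ Finset.range n, nodeNorm q κ ℓ n (insert (a k) (initialShape a k)) (a k)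

variable {q κ} {ℓ n : ℕ} {S : Set Node} {A B : Node}

theorem nodeNorm_insert_of_nodeBelow (h : nodeBelow A B) :
    nodeNorm q κ ℓ n (insert A S) B = nodeNorm q κ ℓ n S B := by
  unfold nodeNorm
  congr 1
  refine Finset.prod_congr rfl fun p hp => ?_
  have hlen : rowLen (insert A S) p.1 p.2 = rowLen S p.1 p.2 := rowLen_insert_of_ne <| by
    have := (mem_rowsBelow.mp hp).2.2
    simp only [nodeBelow] at *
    omega
  simp only [rowFactor, rowEnd, hlen]

theorem rowFactor_insert (hq : q ≠ 0) (hAB : nodeValue q κ A ≠ nodeValue q κ B)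
    (hAB' : nodeValue q κ A ≠ q ^ (nodeContent κ B - 1)) (hB : B.2.2 = rowLen S B.1 B.2.1)
    (hlen : rowLen (insert B S) B.1 B.2.1 = rowLen S B.1 B.2.1 + 1) :
    rowFactor q κ (insert B S) A B.1 B.2.1 =
      rowFactor q κ S A B.1 B.2.1 * swapRatio q κ A B := by
  have hend : rowEnd S B.1 B.2.1 = B := by rw [rowEnd, ← hB]
  have hend' : nodeContent κ (rowEnd (insert B S) B.1 B.2.1) = nodeContent κ B + 1 := by
    simp only [nodeContent, rowEnd, hlen, ← hB]
    push_cast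
    ring
  have hsub := sub_ne_zero.mpr hAB
  have hsub' := sub_ne_zero.mpr hAB'
  simp only [rowFactor, hend, hend', hlen, swapRatio, add_sub_cancel_right]
  rw [zpow_sub_one₀ hq] at hsub' ⊢
  rw [zpow_add_one₀ hq]
  simp only [nodeValue] at hsub hsub' ⊢
  generalize q ^ nodeContent κ A = x, q ^ nodeContent κ B = y at *
  have hdenom : x - y * q⁻¹ = (x * q - y) / q := by field_simp
  rw [hdenom] at hsub' ⊢
  have hnum : x * q - y ≠ 0 := (div_ne_zero_iff.mp hsub').1
  field_simp
  ring

theorem nodeNorm_insert (hq : q ≠ 0) (hAB : nodeValue q κ A ≠ nodeValue q κ B)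
    (hAB' : nodeValue q κ A ≠ q ^ (nodeContent κ B - 1)) (hB : B.2.2 = rowLen S B.1 B.2.1)
    (hlen : rowLen (insert B S) B.1 B.2.1 = rowLen S B.1 B.2.1 + 1)
    (hrow : ⟨B.1, B.2.1⟩ ∈ rowsBelow ℓ n A) :
    nodeNorm q κ ℓ n (insert B S) A = nodeNorm q κ ℓ n S A * swapRatio q κ A B := by
  have hrest : ∀ p ∈ (rowsBelow ℓ n A).erase ⟨B.1, B.2.1⟩,
      rowFactor q κ (insert B S) A p.1 p.2 = rowFactor q κ S A p.1 p.2 := fun p hp => by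
    have hlen : rowLen (insert B S) p.1 p.2 = rowLen S p.1 p.2 :=
      rowLen_insert_of_ne fun h => (Finset.mem_erase.mp hp).1 (Sigma.ext h.1 (heq_of_eq h.2))
    simp only [rowFactor, rowEnd, hlen]
  rw [nodeNorm, nodeNorm, ← Finset.mul_prod_erase _ _ hrow, ← Finset.mul_prod_erase _ _ hrow,
    Finset.prod_congr rfl hrest, rowFactor_insert hq hAB hAB' hB hlen]
  ring

end NodeNorm

section SeqNorm

variable {K : Type*} [Field K] {q : K} {κ : ℕ → ℤ} {ℓ n : ℕ} {S Λ : Set Node} {A : Node}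
  {a a₀ : ℕ → Node} {k r : ℕ}

theorem ne_zero_of_zpow_injective (hq : Function.Injective (q ^ · : ℤ → K)) : q ≠ 0 := by
  rintro rfl
  exact absurd (hq (by simp : (0 : K) ^ (1 : ℤ) = 0 ^ (2 : ℤ))) (by decide)

theorem nodeNorm_ne_zero (hq : Function.Injective (q ^ · : ℤ → K)) (hS : IsDiagramSet ℓ S)
    (hn : S.ncard ≤ n) (hκ : IsSeparated n κ) (hA : Removable ℓ S A) :
    nodeNorm q κ ℓ n S A ≠ 0 := by
  have hAn := (hS.lt_ncard hA.1).1
  have sub_ne_zero : ∀ c < nodeContent κ A, nodeValue q κ A - q ^ c ≠ 0 := fun c hc h =>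
    hc.ne' (hq (sub_eq_zero.mp h))
  refine mul_ne_zero (Finset.prod_ne_zero_iff.mpr fun p hp => ?_)
    (Finset.prod_ne_zero_iff.mpr fun l hl => sub_ne_zero _ ?_)
  · have := hS.nodeContent_rowEnd_lt hn hκ hA (mem_rowsBelow.mp hp).2.2
    exact div_ne_zero
      (mul_ne_zero (pow_ne_zero _ (ne_zero_of_zpow_injective hq)) (sub_ne_zero _ this))
      (sub_ne_zero _ (by omega))
  · refine hκ.nodeContent_lt_of_nodeBelow (by omega) ?_
    rw [Finset.mem_Ico] at hl
    simp only [nodeBelow]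
    omega

theorem prod_Ico_div_succ_mul {f : ℕ → K} {s : ℕ} (hs : s ≤ n)
    (hf : ∀ r ∈ Finset.Ioc s n, f r ≠ 0) :
    (∏ r ∈ Finset.Ico s n, f r / f (r + 1)) * f n = f s := by
  induction n, hs using Nat.le_induction with
  | base => simp
  | succ n hs ih =>
    rw [Finset.prod_Ico_succ_top hs, mul_assoc, div_mul_cancel₀ _ (hf _ (by simp; omega))]
    exact ih fun r hr => hf r (by simp at hr ⊢; omega)

theorem nodeNorm_eq_prod_firstNodeBelow (hq : Function.Injective (q ^ · : ℤ → K))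
    (hκ : IsSeparated n κ) (hA : A.2.1 < n)
    (hS : ∀ p ∈ rowsBelow ℓ n A, rowLen S p.1 p.2 = 0) :
    nodeNorm q κ ℓ n S A =
      ∏ l ∈ Finset.Ico A.1 ℓ, (nodeValue q κ A - nodeValue q κ (firstNodeBelow A l)) := by
  rw [nodeNorm, rowsBelow, Finset.prod_sigma, ← Finset.prod_mul_distrib]
  refine Finset.prod_congr rfl fun l hl => ?_
  have hl' := Finset.mem_Ico.mp hl
  have hs : (firstNodeBelow A l).2.1 ≤ n := by
    unfold firstNodeBelow
    split_ifs <;> (dsimp only; omega)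
  have htel := prod_Ico_div_succ_mul (f := fun r => nodeValue q κ A - nodeValue q κ (l, r, 0)) hs
    fun r hr => sub_ne_zero.mpr fun h => ?_
  · refine Eq.trans ?_ htel
    congr 1
    refine Finset.prod_congr rfl fun r hr => ?_
    have hlen := hS ⟨l, r⟩ (Finset.mem_sigma.mpr ⟨hl, hr⟩)
    simp only at hlen
    simp only [rowFactor, rowEnd, hlen, nodeValue, nodeContent, pow_zero, one_mul]
    push_cast
    ring_nf
  · refine (hκ.nodeContent_lt_of_nodeBelow hA.le ?_).ne' (hq h)
    have := (Finset.mem_Ioc.mp hr).1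
    unfold firstNodeBelow at this
    simp only [nodeBelow]
    split_ifs at this <;> (dsimp only at this; omega)

namespace IsStandardSeq

theorem nodeNorm_ne_zero (hq : Function.Injective (q ^ · : ℤ → K)) (ha : IsStandardSeq n Λ a)
    (hΛ : IsDiagramSet ℓ Λ) (hκ : IsSeparated n κ) (hk : k < n) :
    nodeNorm q κ ℓ n (insert (a k) (initialShape a k)) (a k) ≠ 0 :=
  Paper.nodeNorm_ne_zero hq (ha.isDiagramSet_insert hΛ hk) (ncard_insert_initialShape_le a hk) hκ
    (ha.removable hΛ hk)

theorem seqNorm_swapAt (hq : Function.Injective (q ^ · : ℤ → K)) (ha : IsStandardSeq n Λ a)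
    (hΛ : IsDiagramSet ℓ Λ) (hκ : IsSeparated n κ) (hr : r + 1 < n)
    (h : nodeBelow (a r) (a (r + 1))) (hs : IsStandardSeq n Λ (Paper.swapAt r a)) :
    seqNorm q κ ℓ n (Paper.swapAt r a) =
      seqNorm q κ ℓ n a * swapRatio q κ (a r) (a (r + 1)) := by
  have hprod := prod_initialShape_swapAt a (fun S A => nodeNorm q κ ℓ n (insert A S) A) hr
  have hA := ha.nodeNorm_ne_zero hq hΛ hκ (k := r) (by omega)
  have hB := ha.nodeNorm_ne_zero hq hΛ hκ hr
  obtain ⟨hlen, hlen'⟩ := ha.rowLen_insert hΛ hr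
  have hcont := ha.nodeContent_succ_lt hΛ hκ hr h hs
  have hrow : (⟨(a (r + 1)).1, (a (r + 1)).2.1⟩ : Σ _ : ℕ, ℕ) ∈ rowsBelow ℓ n (a r) :=
    mem_rowsBelow.mpr ⟨hΛ.2.1 _ (ha.bijOn.mapsTo hr), (ha.lt_of_lt hΛ hr).1,
      hs.nodeBelow_row hr h⟩
  have hAB := nodeNorm_insert (ne_zero_of_zpow_injective hq) (fun h => hcont.ne' (hq h))
    (fun h => by have := hq h; omega) hlen hlen' hrow
  rw [initialShape_succ, Set.insert_comm, nodeNorm_insert_of_nodeBelow h] at hB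
  simp only [Set.insert_comm (a (r + 1)) (a r)] at hAB hprod
  rw [hAB, nodeNorm_insert_of_nodeBelow h] at hprod
  refine mul_right_cancel₀ (mul_ne_zero hA hB) ?_
  unfold seqNorm
  linear_combination hprod

theorem seqNorm_mul_β (hq : Function.Injective (q ^ · : ℤ → K)) (ha : IsStandardSeq n Λ a)
    (hΛ : IsDiagramSet ℓ Λ) (hκ : IsSeparated n κ) (hr : r + 1 < n)
    (hs : IsStandardSeq n Λ (Paper.swapAt r a)) :
    seqNorm q κ ℓ n a * (seminormal q κ).β (a r) (a (r + 1)) =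
      seqNorm q κ ℓ n (Paper.swapAt r a) * (seminormal q κ).β (a (r + 1)) (a r) := by
  have hne : a r ≠ a (r + 1) := fun h => r.succ_ne_self ((ha.eq_iff (by omega) hr).mp h).symm
  simp only [seminormal]
  rcases nodeBelow_or_nodeBelow hne with h | h
  · rw [if_neg (nodeBelow_asymm h), if_pos h, mul_one, ha.seqNorm_swapAt hq hΛ hκ hr h hs]
  · have := hs.seqNorm_swapAt hq hΛ hκ hr (by simpa using h) (by simpa using ha)
    rw [swapAt_swapAt, swapAt_apply_left, swapAt_apply_right] at this
    rw [if_neg (nodeBelow_asymm h), if_pos h, mul_one, this]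

end IsStandardSeq

theorem isAdmissible_seminormal (hq : Function.Injective (q ^ · : ℤ → K)) (hΛ : IsDiagramSet ℓ Λ)
    (hκ : IsSeparated n κ) :
    (seminormal q κ).IsAdmissible {a | IsStandardSeq n Λ a} (n - 1) where
  β_eq_zero a ha r hr hs := by
    have hr' : r + 1 < n := by omega
    have hle : NodeLE (a r) (a (r + 1)) := by
      by_contra hle
      exact hs (IsStandardSeq.swapAt ha hr' hle)
    have hne : a r ≠ a (r + 1) := fun h => r.succ_ne_self ((ha.eq_iff (by omega) hr').mp h).symm
    have hq₀ := ne_zero_of_zpow_injective hq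
    have hnum : (q * nodeValue q κ (a r) - nodeValue q κ (a (r + 1))) *
        (nodeValue q κ (a r) - q * nodeValue q κ (a (r + 1))) = 0 := by
      rcases ha.nodeContent_eq_of_nodeLE hΛ hr' hle κ with h | h
      · simp only [nodeValue, h, zpow_add_one₀ hq₀]
        ring
      · simp only [nodeValue, h, zpow_sub_one₀ hq₀]
        field_simp
        ring
    simp only [seminormal, nodeBelow_asymm (hle.nodeBelow hne), if_false, swapRatio, hnum,
      zero_div]
  x_ne_x_add_one a ha r hr h :=
    IsStandardSeq.nodeContent_ne_of_isSeparated ha hΛ hκ (by omega) (by omega) (by omega) (hq h)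
  x_ne_x_add_two a ha r hr h :=
    IsStandardSeq.nodeContent_ne_of_isSeparated ha hΛ hκ (by omega) (by omega) (by omega) (hq h)

theorem IsRowReading.seqNorm_eq_prod (hq : Function.Injective (q ^ · : ℤ → K))
    (h₀ : IsRowReading n a₀) (ha₀ : IsStandardSeq n Λ a₀) (hΛ : IsDiagramSet ℓ Λ)
    (hκ : IsSeparated n κ) :
    seqNorm q κ ℓ n a₀ = ∏ k ∈ Finset.range n, ∏ l ∈ Finset.Ico (a₀ k).1 ℓ,
      (nodeValue q κ (a₀ k) - nodeValue q κ (firstNodeBelow (a₀ k) l)) := by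
  refine Finset.prod_congr rfl fun k hk => ?_
  rw [Finset.mem_range] at hk
  refine nodeNorm_eq_prod_firstNodeBelow hq hκ (ha₀.lt_of_lt hΛ hk).1 fun p hp => ?_
  have hbelow := (mem_rowsBelow.mp hp).2.2
  refine (ha₀.isDiagramSet_insert hΛ hk).rowLen_eq_zero ?_
  rw [← initialShape_succ]
  rintro ⟨j, hj, hjp⟩
  rw [← hjp] at hbelow
  obtain rfl | hjk : j = k ∨ j < k := by
    rw [Set.mem_Iio] at hj
    omega
  · exact nodeBelow_irrefl _ hbelow
  · exact nodeBelow_asymm hbelow (h₀.nodeBelow hjk hk)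

/-- The norms multiply to the Gram determinant of a Specht module, taken with respect to a basis of
an integral form. -/
theorem prod_seqNorm_mem_range {O : Type*} [CommRing O] [Algebra O K] [IsIntegrallyClosedIn O K]
    (hq : Function.Injective (q ^ · : ℤ → K)) (hqO : ∀ k : ℤ, q ^ k ∈ (algebraMap O K).range)
    (hΛ : IsDiagramSet ℓ Λ) (hκ : IsSeparated n κ) [Fintype {a | IsStandardSeq n Λ a}] :
    ∏ a : {a | IsStandardSeq n Λ a}, seqNorm q κ ℓ n a ∈ (algebraMap O K).range := by
  rcases isEmpty_or_nonempty {a | IsStandardSeq n Λ a} with hempty | ⟨⟨a, ha⟩⟩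
  · simp
  obtain ⟨a₀, ha₀, h₀⟩ := exists_isRowReading ⟨a, ha⟩
  have hinj : ∀ A, Set.InjOn (firstNodeBelow A) (Finset.Ico A.1 ℓ) := fun A l _ l' _ h =>
    congrArg Prod.fst h
  have hqO₁ : q ∈ (algebraMap O K).range := by simpa using hqO 1
  refine (isAdmissible_seminormal hq hΛ hκ).prod_mem_range (a₀ := ⟨a₀, ha₀⟩)
    (len := inversionCount n)
    (P := (Finset.range n).sigma fun k => (Finset.Ico (a₀ k).1 ℓ).image (firstNodeBelow (a₀ k)))
    hqO₁ (fun A => hqO _)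
    (fun r hr a ha hs => IsStandardSeq.seqNorm_mul_β hq ha hΛ hκ (by omega) hs)
    (fun a ha r hr => IsStandardSeq.inversionCount_le ha (by omega)) (fun a ha => ?_)
    (fun a ha => ?_) ?_
  · obtain ⟨r, hr, h⟩ := h₀.exists_nodeBelow ha₀ a.2 (Subtype.coe_ne_coe.mpr ha)
    exact ⟨r, by omega, a.2.swapAt_of_nodeBelow hr h, if_pos h,
      a.2.inversionCount_eq_of_nodeBelow hr h⟩
  · obtain ⟨k, hk, l, hl, h⟩ := h₀.exists_eq_firstNodeBelow ha₀ hΛ a.2 (Subtype.coe_ne_coe.mpr ha)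
    exact ⟨⟨k, firstNodeBelow (a₀ k) l⟩, by simpa [hk] using ⟨l, by simpa using hl, rfl⟩, by rw [h]⟩
  · rw [h₀.seqNorm_eq_prod hq ha₀ hΛ hκ, Finset.prod_sigma]
    refine Finset.prod_congr rfl fun k _ => ?_
    rw [Finset.prod_image (hinj _)]
    rfl

end SeqNorm

section NodeDegree

variable {ℓ n e : ℕ} {κ : ℕ → ℤ} {S : Set Node} {A B : Node} {l r c : ℕ}

/-- The indicator function of the multiples of `e`. -/
noncomputable def dvdIndicator (e : ℕ) (k : ℤ) : ℤ := if (e : ℤ) ∣ k then 1 else 0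

/-- The contribution of one row of `S` to the degree of a node `A` above it. -/
noncomputable def rowDegree (e : ℕ) (κ : ℕ → ℤ) (S : Set Node) (A : Node) (l r : ℕ) : ℤ :=
  dvdIndicator e (nodeContent κ A - nodeContent κ (rowEnd S l r)) -
    dvdIndicator e (nodeContent κ A - (nodeContent κ (rowEnd S l r) - 1))

theorem resNode_eq_iff : resNode e κ B = resNode e κ A ↔
    (e : ℤ) ∣ nodeContent κ A - nodeContent κ B :=
  ZMod.intCast_eq_intCast_iff_dvd_sub _ _ _

theorem ncard_eq_sum_ite {ι N : Type*} {P : Set N} {T : Finset ι} {f : ι → N}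
    (hf : Set.InjOn f T) (hP : P ⊆ f '' T) :
    (P.ncard : ℤ) = ∑ i ∈ T, if f i ∈ P then 1 else 0 := by
  have himage : P = f '' (T.filter (f · ∈ P)) := by
    ext x
    constructor
    · intro hx
      obtain ⟨i, hi, rfl⟩ := hP hx
      exact ⟨i, Finset.mem_filter.mpr ⟨hi, hx⟩, rfl⟩
    · rintro ⟨i, hi, rfl⟩
      exact (Finset.mem_filter.mp hi).2
  conv_lhs => rw [himage]
  rw [(hf.mono (Finset.coe_subset.mpr (Finset.filter_subset _ _))).ncard_image,
    Set.ncard_coe_finset, Finset.card_filter]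
  push_cast
  rfl

theorem firstNodeBelow_row_le_iff (hl : A.1 ≤ l) :
    (firstNodeBelow A l).2.1 ≤ r ↔ nodeBelow A (l, r, 0) := by
  simp only [firstNodeBelow, nodeBelow]
  split_ifs <;> omega

theorem fst_le_of_nodeBelow (h : nodeBelow A B) : A.1 ≤ B.1 := by
  simp only [nodeBelow] at h
  omega

namespace IsDiagramSet

theorem lt_ncard_of_rowLen_pos (hS : IsDiagramSet ℓ S) (h : 0 < rowLen S l r) : r < S.ncard :=
  (hS.lt_ncard (hS.mem_iff_lt_rowLen.mpr h)).1

theorem nodeBelow_of_addable (hS : IsDiagramSet ℓ S) (he : e ≠ 1) (hA : Removable ℓ S A)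
    (hB : Addable ℓ S (l, r, c)) (hres : resNode e κ (l, r, c) = resNode e κ A)
    (hbelow : nodeBelow A (l, r, c)) : nodeBelow A (l, r, 0) := by
  obtain ⟨-, rfl, -⟩ := hS.addable_iff.mp hB
  suffices ¬ (l = A.1 ∧ r = A.2.1) by
    simp only [nodeBelow] at hbelow ⊢
    omega
  rintro ⟨rfl, rfl⟩
  obtain ⟨hlen, -⟩ := hS.removable_iff.mp hA
  have hcont : nodeContent κ A - nodeContent κ (A.1, A.2.1, rowLen S A.1 A.2.1) = -1 := by
    simp only [nodeContent, ← hlen]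
    push_cast
    ring
  rw [resNode_eq_iff, hcont, dvd_neg, Int.natCast_dvd_ofNat, Nat.dvd_one] at hres
  exact he hres

theorem nodeBelow_of_removable (hS : IsDiagramSet ℓ S) (hA : Removable ℓ S A)
    (hB : Removable ℓ S (l, r, c)) (hbelow : nodeBelow A (l, r, c)) : nodeBelow A (l, r, 0) := by
  obtain ⟨hc, -⟩ := hS.removable_iff.mp hB
  obtain ⟨hlen, -⟩ : A.2.2 + 1 = rowLen S A.1 A.2.1 ∧ _ := hS.removable_iff.mp hA
  have hrow : ¬ (l = A.1 ∧ r = A.2.1 ∧ A.2.2 < c) := by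
    rintro ⟨rfl, rfl, h⟩
    omega
  simp only [nodeBelow] at hbelow ⊢
  omega

theorem ncard_addable_eq_sum (hS : IsDiagramSet ℓ S) (hn : S.ncard ≤ n) (he : e ≠ 1)
    (hA : Removable ℓ S A) :
    ({B | Addable ℓ S B ∧ resNode e κ B = resNode e κ A ∧ nodeBelow A B}.ncard : ℤ) =
      ∑ l ∈ Finset.Ico A.1 ℓ, ∑ r ∈ Finset.Ico (firstNodeBelow A l).2.1 (n + 1),
        if r = 0 ∨ rowLen S l r < rowLen S l (r - 1) then
          dvdIndicator e (nodeContent κ A - nodeContent κ (rowEnd S l r)) else 0 := by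
  rw [Finset.sum_sigma', ncard_eq_sum_ite (f := fun p => rowEnd S p.1 p.2)
    (T := (Finset.Ico A.1 ℓ).sigma fun l => Finset.Ico (firstNodeBelow A l).2.1 (n + 1))]
  · refine Finset.sum_congr rfl fun p hp => ?_
    rw [Finset.mem_sigma, Finset.mem_Ico, Finset.mem_Ico] at hp
    have hbelow : nodeBelow A (p.1, p.2, rowLen S p.1 p.2) := by
      have := (firstNodeBelow_row_le_iff hp.1.1).mp hp.2.1
      simp only [nodeBelow] at this ⊢
      omega
    simp only [Set.mem_ofPred_eq, resNode_eq_iff, rowEnd, hS.addable_iff, hp.1.2, hbelow,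
      true_and, and_true, dvdIndicator, ite_and]
    congr!
  · rintro ⟨l, r⟩ - ⟨l', r'⟩ - h
    simp_all [rowEnd]
  · rintro ⟨l, r, c⟩ ⟨hadd, hres, hbelow⟩
    have hbelow' : nodeBelow A (l, r, 0) := hS.nodeBelow_of_addable he hA hadd hres hbelow
    have hAl : A.1 ≤ l := fst_le_of_nodeBelow hbelow
    obtain ⟨hl, rfl, hr⟩ := hS.addable_iff.mp hadd
    have hrn : r = 0 ∨ r - 1 < S.ncard :=
      hr.imp_right fun h => hS.lt_ncard_of_rowLen_pos (pos_of_gt h)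
    refine ⟨⟨l, r⟩, ?_, rfl⟩
    simp only [Finset.coe_sigma, Set.mem_sigma_iff, Finset.mem_coe, Finset.mem_Ico,
      firstNodeBelow_row_le_iff hAl]
    exact ⟨⟨hAl, hl⟩, hbelow', by omega⟩

theorem ncard_removable_eq_sum (hS : IsDiagramSet ℓ S) (hn : S.ncard ≤ n)
    (hA : Removable ℓ S A) :
    ({B | Removable ℓ S B ∧ resNode e κ B = resNode e κ A ∧ nodeBelow A B}.ncard : ℤ) =
      ∑ l ∈ Finset.Ico A.1 ℓ, ∑ r ∈ Finset.Ico (firstNodeBelow A l).2.1 n,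
        if rowLen S l (r + 1) < rowLen S l r then
          dvdIndicator e (nodeContent κ A - (nodeContent κ (rowEnd S l r) - 1)) else 0 := by
  rw [Finset.sum_sigma', ncard_eq_sum_ite (f := fun p => (p.1, p.2, rowLen S p.1 p.2 - 1))
    (T := (Finset.Ico A.1 ℓ).sigma fun l => Finset.Ico (firstNodeBelow A l).2.1 n)]
  · refine Finset.sum_congr rfl fun p hp => ?_
    rw [Finset.mem_sigma, Finset.mem_Ico, Finset.mem_Ico] at hp
    have hbelow : nodeBelow A (p.1, p.2, rowLen S p.1 p.2 - 1) := by
      have := (firstNodeBelow_row_le_iff hp.1.1).mp hp.2.1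
      simp only [nodeBelow] at this ⊢
      omega
    by_cases hlt : rowLen S p.1 (p.2 + 1) < rowLen S p.1 p.2
    · have hpos : 1 ≤ rowLen S p.1 p.2 := Nat.one_le_of_lt hlt
      have hcont : nodeContent κ (p.1, p.2, rowLen S p.1 p.2 - 1) =
          nodeContent κ (rowEnd S p.1 p.2) - 1 := by
        simp only [nodeContent, rowEnd, Nat.cast_sub hpos]
        push_cast
        ring
      simp only [Set.mem_ofPred_eq, resNode_eq_iff, hS.removable_iff, hbelow, hcont, hlt,
        Nat.sub_add_cancel hpos, true_and, and_true, dvdIndicator, if_true]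
    · simp only [Set.mem_ofPred_eq, hS.removable_iff, hlt, and_false, false_and, if_false]
  · rintro ⟨l, r⟩ - ⟨l', r'⟩ - h
    simp_all
  · rintro ⟨l, r, c⟩ ⟨hrem, -, hbelow⟩
    obtain ⟨hc, hlt⟩ := hS.removable_iff.mp hrem
    have hl : l < ℓ := hS.2.1 _ hrem.1
    have hrn : r < S.ncard := hS.lt_ncard_of_rowLen_pos (pos_of_gt hlt)
    have hbelow' : nodeBelow A (l, r, 0) := hS.nodeBelow_of_removable hA hrem hbelow
    have hAl : A.1 ≤ l := fst_le_of_nodeBelow hbelow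
    refine ⟨⟨l, r⟩, ?_, by simp [← hc]⟩
    simp only [Finset.coe_sigma, Set.mem_sigma_iff, Finset.mem_coe, Finset.mem_Ico,
      firstNodeBelow_row_le_iff hAl]
    exact ⟨⟨hAl, hl⟩, hbelow', by omega⟩

/-- Consecutive rows of equal length contribute neither an addable nor a removable node; their
contributions to the right-hand side cancel. -/
theorem sum_addable_sub_sum_removable (hS : IsDiagramSet ℓ S) (f : ℤ → ℤ) {s : ℕ} (hs : s ≤ n)
    (hadd : s = 0 ∨ rowLen S l s < rowLen S l (s - 1)) :
    ((∑ r ∈ Finset.Ico s (n + 1), if r = 0 ∨ rowLen S l r < rowLen S l (r - 1) then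
        f (nodeContent κ (rowEnd S l r)) else 0) -
      ∑ r ∈ Finset.Ico s n, if rowLen S l (r + 1) < rowLen S l r then
        f (nodeContent κ (rowEnd S l r) - 1) else 0) =
      ∑ r ∈ Finset.Ico s n, (f (nodeContent κ (rowEnd S l r)) -
        f (nodeContent κ (rowEnd S l r) - 1)) + f (nodeContent κ (rowEnd S l n)) := by
  induction n, hs using Nat.le_induction with
  | base => simp [if_pos hadd]
  | succ n hs ih =>
    have hstep : rowLen S l (n + 1) = rowLen S l n → nodeContent κ (rowEnd S l n) - 1 =
        nodeContent κ (rowEnd S l (n + 1)) := fun h => by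
      simp only [nodeContent, rowEnd, h]
      push_cast
      ring
    have hs' : s ≤ n + 1 := Nat.le_add_right_of_le hs
    simp only [Finset.sum_Ico_succ_top hs, Finset.sum_Ico_succ_top hs', Nat.add_sub_cancel,
      Nat.add_one_ne_zero, false_or] at ih ⊢
    rcases (hS.rowLen_antitone l (n.le_add_right 1)).lt_or_eq with hlt | heq
    · simp only [if_pos hlt]
      linarith
    · simp only [heq, lt_irrefl, if_false, hstep heq]
      linarith

theorem dNode_eq_sum (hS : IsDiagramSet ℓ S) (hn : S.ncard ≤ n) (he : e ≠ 1)
    (hA : Removable ℓ S A) :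
    dNode ℓ e κ S A = ∑ p ∈ rowsBelow ℓ n A, rowDegree e κ S A p.1 p.2 +
      ∑ l ∈ Finset.Ico A.1 ℓ, dvdIndicator e (nodeContent κ A - nodeContent κ (l, n, 0)) := by
  rw [dNode, hS.ncard_addable_eq_sum hn he hA, hS.ncard_removable_eq_sum hn hA, rowsBelow,
    Finset.sum_sigma, ← Finset.sum_sub_distrib, ← Finset.sum_add_distrib]
  refine Finset.sum_congr rfl fun l _ => ?_
  obtain ⟨-, hlt⟩ : A.2.2 + 1 = rowLen S A.1 A.2.1 ∧
    rowLen S A.1 (A.2.1 + 1) < rowLen S A.1 A.2.1 := hS.removable_iff.mp hA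
  have hAn : A.2.1 < n := (hS.lt_ncard hA.1).1.trans_le hn
  have hend : rowEnd S l n = (l, n, 0) := by
    rw [rowEnd, hS.rowLen_eq_zero fun h => (hS.lt_ncard h).1.not_ge hn]
  have hs : (firstNodeBelow A l).2.1 ≤ n := by
    simp only [firstNodeBelow]
    split_ifs <;> omega
  have hadd : (firstNodeBelow A l).2.1 = 0 ∨ rowLen S l (firstNodeBelow A l).2.1 <
      rowLen S l ((firstNodeBelow A l).2.1 - 1) := by
    simp only [firstNodeBelow]
    split_ifs with h
    · exact Or.inr (h ▸ hlt)
    · exact Or.inl rfl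
  simp only [rowDegree, ← hend]
  exact hS.sum_addable_sub_sum_removable (fun k => dvdIndicator e (nodeContent κ A - k)) hs hadd

end IsDiagramSet

end NodeDegree

section CyclotomicValuation

open WithZero

/-- The degree of the standard tableau which corresponds to the sequence `a`. -/
noncomputable def seqDegree (ℓ e : ℕ) (κ : ℕ → ℤ) (n : ℕ) (a : ℕ → Node) : ℤ :=
  ∑ k ∈ Finset.range n, dNode ℓ e κ (insert (a k) (initialShape a k)) (a k)

theorem exp_neg_sum {ι : Type*} (s : Finset ι) (f : ι → ℤ) :
    exp (-∑ i ∈ s, f i) = ∏ i ∈ s, exp (-f i) := by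
  rw [← Finset.sum_neg_distrib]
  induction s using Finset.cons_induction with
  | empty => simp
  | cons i s hi ih => rw [Finset.sum_cons, Finset.prod_cons, exp_add, ih]

/-- A valuation for which `q` specializes to a primitive `e`-th root of unity in the residue field
and the quantum integers `(q ^ k - 1) / (q - 1)` vanish to order at most one. -/
structure IsCyclotomicValuation {K : Type*} [Field K] (v : Valuation K ℤᵐ⁰) (q : K) (e : ℕ) :
    Prop where
  map_eq_one : v q = 1
  map_zpow_sub_one : ∀ k : ℤ, k ≠ 0 → v (q ^ k - 1) = exp (-dvdIndicator e k)

namespace IsCyclotomicValuation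

variable {K : Type*} [Field K] {v : Valuation K ℤᵐ⁰} {q : K} {ℓ n e : ℕ} {κ : ℕ → ℤ}
  {S Λ : Set Node} {A : Node} {a : ℕ → Node} {l r : ℕ}

theorem of_pow (hq : v q = 1) (h : ∀ k : ℕ, k ≠ 0 → v (q ^ k - 1) = exp (-dvdIndicator e k)) :
    IsCyclotomicValuation v q e := by
  refine ⟨hq, fun k hk => ?_⟩
  obtain ⟨m, rfl | rfl⟩ := k.eq_nat_or_neg
  · rw [zpow_natCast, h m (by simpa using hk)]
  · have hq0 : q ≠ 0 := v.ne_zero_iff.mp (hq ▸ one_ne_zero)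
    have hfactor : q ^ (-m : ℤ) - 1 = -(q ^ m - 1) * q ^ (-m : ℤ) := by
      rw [zpow_neg, zpow_natCast]
      field_simp
      ring
    rw [hfactor, map_mul, Valuation.map_neg, h m (by simpa using hk), map_zpow₀, hq, one_zpow,
      mul_one]
    simp only [dvdIndicator, dvd_neg]

theorem ne_zero (hv : IsCyclotomicValuation v q e) : q ≠ 0 :=
  v.ne_zero_iff.mp (hv.map_eq_one ▸ one_ne_zero)

theorem map_zpow (hv : IsCyclotomicValuation v q e) (k : ℤ) : v (q ^ k) = 1 := by
  rw [map_zpow₀, hv.map_eq_one, one_zpow]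

theorem map_zpow_sub_zpow (hv : IsCyclotomicValuation v q e) {i j : ℤ} (hij : i ≠ j) :
    v (q ^ i - q ^ j) = exp (-dvdIndicator e (i - j)) := by
  have hfactor : q ^ i - q ^ j = q ^ j * (q ^ (i - j) - 1) := by
    rw [mul_sub, ← zpow_add₀ hv.ne_zero, add_sub_cancel, mul_one]
  rw [hfactor, map_mul, hv.map_zpow, one_mul, hv.map_zpow_sub_one _ (sub_ne_zero.mpr hij)]

theorem zpow_injective (hv : IsCyclotomicValuation v q e) :
    Function.Injective (q ^ · : ℤ → K) := by
  intro i j hij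
  by_contra hne
  have := hv.map_zpow_sub_zpow hne
  rw [sub_eq_zero.mpr hij, map_zero] at this
  exact exp_ne_zero this.symm

theorem map_rowFactor (hv : IsCyclotomicValuation v q e)
    (h : nodeContent κ (rowEnd S l r) < nodeContent κ A) :
    v (rowFactor q κ S A l r) = exp (-rowDegree e κ S A l r) := by
  have hpow : v (q ^ rowLen S l r) = 1 := by simpa using hv.map_zpow (rowLen S l r)
  rw [rowFactor, map_div₀, map_mul, nodeValue, hpow, one_mul, hv.map_zpow_sub_zpow h.ne',
    hv.map_zpow_sub_zpow (by omega), ← exp_sub, rowDegree]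
  congr 1
  ring

theorem map_nodeNorm (hv : IsCyclotomicValuation v q e) (hS : IsDiagramSet ℓ S) (hn : S.ncard ≤ n)
    (hκ : IsSeparated n κ) (he : e ≠ 1) (hA : Removable ℓ S A) :
    v (nodeNorm q κ ℓ n S A) = exp (-dNode ℓ e κ S A) := by
  rw [nodeNorm, map_mul, map_prod, map_prod, hS.dNode_eq_sum hn he hA, neg_add, exp_add,
    exp_neg_sum, exp_neg_sum]
  congr 1
  · exact Finset.prod_congr rfl fun p hp => hv.map_rowFactor
      (hS.nodeContent_rowEnd_lt hn hκ hA (mem_rowsBelow.mp hp).2.2)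
  · have hAn := (hS.lt_ncard hA.1).1.trans_le hn
    refine Finset.prod_congr rfl fun l hl => hv.map_zpow_sub_zpow ?_
    refine (hκ.nodeContent_lt_of_nodeBelow hAn.le ?_).ne'
    rw [Finset.mem_Ico] at hl
    simp only [nodeBelow]
    omega

theorem map_seqNorm (hv : IsCyclotomicValuation v q e) (hΛ : IsDiagramSet ℓ Λ)
    (hκ : IsSeparated n κ) (he : e ≠ 1) (ha : IsStandardSeq n Λ a) :
    v (seqNorm q κ ℓ n a) = exp (-seqDegree ℓ e κ n a) := by
  rw [seqNorm, map_prod, seqDegree, exp_neg_sum]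
  refine Finset.prod_congr rfl fun k hk => ?_
  rw [Finset.mem_range] at hk
  exact hv.map_nodeNorm (ha.isDiagramSet_insert hΛ hk) (ncard_insert_initialShape_le a hk) hκ he
    (ha.removable hΛ hk)

theorem sum_seqDegree_nonneg (hv : IsCyclotomicValuation v q e) (hΛ : IsDiagramSet ℓ Λ)
    (hκ : IsSeparated n κ) (he : e ≠ 1) [Fintype {a | IsStandardSeq n Λ a}] :
    0 ≤ ∑ a : {a | IsStandardSeq n Λ a}, seqDegree ℓ e κ n a := by
  obtain ⟨x, hx⟩ := prod_seqNorm_mem_range (O := v.valuationSubring) hv.zpow_injective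
    (fun k => ⟨⟨q ^ k, (hv.map_zpow k).le⟩, rfl⟩) hΛ hκ
  have hle : v (∏ a : {a | IsStandardSeq n Λ a}, seqNorm q κ ℓ n a) ≤ 1 := hx ▸ x.2
  rwa [map_prod, Finset.prod_congr rfl fun a _ => hv.map_seqNorm hΛ hκ he a.2, ← exp_neg_sum,
    ← exp_zero, exp_le_exp, neg_nonpos] at hle

end IsCyclotomicValuation

open Polynomial

section LinearPlace

variable {F : Type*} [Field F] {ζ : F} {P : IsDedekindDomain.HeightOneSpectrum F[X]}

theorem intValuation_eq_one_of_eval_ne_zero (hP : P.asIdeal = Ideal.span {X - C ζ}) {f : F[X]}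
    (hf : f.eval ζ ≠ 0) : P.intValuation f = 1 := by
  rwa [P.intValuation_eq_one_iff, hP, Ideal.mem_span_singleton, dvd_iff_isRoot]

theorem intValuation_X_pow_sub_one [CharZero F] (hP : P.asIdeal = Ideal.span {X - C ζ}) {e : ℕ}
    (hζ : IsPrimitiveRoot ζ e) (he : e ≠ 0) {k : ℕ} (hk : k ≠ 0) :
    P.intValuation (X ^ k - 1) = exp (-dvdIndicator e k) := by
  rw [dvdIndicator]
  split_ifs with hdvd
  · have hζk : ζ ^ k = 1 := (hζ.pow_eq_one_iff_dvd k).mpr (by exact_mod_cast hdvd)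
    have hfactor := geom_sum₂_mul (X : F[X]) (C ζ) k
    rw [← C_pow, hζk, C_1] at hfactor
    rw [← hfactor, map_mul, P.intValuation_singleton (X_sub_C_ne_zero ζ) hP,
      intValuation_eq_one_of_eval_ne_zero hP, one_mul]
    simp [eval_finsetSum, geom_sum₂_self, hk, hζ.ne_zero he]
  · rw [neg_zero, exp_zero]
    refine intValuation_eq_one_of_eval_ne_zero hP fun h => hdvd ?_
    simp only [eval_sub, eval_pow, eval_X, eval_one, sub_eq_zero] at h
    exact_mod_cast (hζ.pow_eq_one_iff_dvd k).mp h

end LinearPlace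

theorem exists_isCyclotomicValuation {F : Type*} [Field F] [CharZero F] {ζ : F} {e : ℕ}
    (hζ : IsPrimitiveRoot ζ e) (he : e ≠ 0) :
    ∃ v : Valuation (RatFunc F) ℤᵐ⁰, IsCyclotomicValuation v RatFunc.X e := by
  let P : IsDedekindDomain.HeightOneSpectrum F[X] :=
    { asIdeal := Ideal.span {X - C ζ}
      isPrime := (Ideal.span_singleton_prime (X_sub_C_ne_zero ζ)).mpr (prime_X_sub_C ζ)
      ne_bot := by simpa using X_sub_C_ne_zero ζ }
  refine ⟨P.valuation (RatFunc F), .of_pow ?_ fun k hk => ?_⟩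
  · rw [← RatFunc.algebraMap_X, P.valuation_of_algebraMap]
    exact intValuation_eq_one_of_eval_ne_zero rfl (by simpa using hζ.ne_zero he)
  · have hX : (RatFunc.X : RatFunc F) ^ k - 1 = algebraMap F[X] (RatFunc F) (X ^ k - 1) := by simp
    rw [hX, P.valuation_of_algebraMap, intValuation_X_pow_sub_one rfl hζ he hk]

end CyclotomicValuation

section ArbitraryCharges

open Filter

variable {ℓ n e : ℕ} {κ κ' : ℕ → ℤ} {S Λ : Set Node} {A : Node} {a : ℕ → Node}

theorem resNode_congr (h : ∀ l, (κ' l : ZMod e) = κ l) : resNode e κ' = resNode e κ := by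
  funext A
  simp only [resNode, Int.cast_sub, Int.cast_add, h]

theorem seqDegree_congr (h : ∀ l, (κ' l : ZMod e) = κ l) (a : ℕ → Node) :
    seqDegree ℓ e κ' n a = seqDegree ℓ e κ n a := by
  simp only [seqDegree, dNode, resNode_congr h]

theorem exists_isSeparated (he : e ≠ 0) (n : ℕ) (κ : ℕ → ℤ) :
    ∃ κ', IsSeparated n κ' ∧ ∀ l, (κ' l : ZMod e) = κ l := by
  refine ⟨fun l => κ l % e - e * (l * (2 * n + 1)), fun l l' h => ?_, fun l => by simp⟩
  have he' : (1 : ℤ) ≤ e := by omega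
  have hmod := Int.emod_nonneg (κ l) (by omega : (e : ℤ) ≠ 0)
  have hmod' := Int.emod_lt_of_pos (κ l') (by omega : (0 : ℤ) < e)
  have hgap : (e : ℤ) + 2 * n ≤ e * ((l' - l) * (2 * n + 1)) := by
    have hl : (1 : ℤ) ≤ l' - l := by omega
    calc (e : ℤ) + 2 * n ≤ e + e * (2 * n) := by nlinarith
      _ = e * (1 * (2 * n + 1)) := by ring
      _ ≤ e * ((l' - l) * (2 * n + 1)) := by gcongr
  linarith

theorem sum_seqDegree_nonneg_of_two_le (he : 2 ≤ e) (hΛ : IsDiagramSet ℓ Λ)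
    [Fintype {a | IsStandardSeq n Λ a}] (κ : ℕ → ℤ) :
    0 ≤ ∑ a : {a | IsStandardSeq n Λ a}, seqDegree ℓ e κ n a := by
  have he0 : e ≠ 0 := by omega
  obtain ⟨κ', hκ', hres⟩ := exists_isSeparated he0 n κ
  obtain ⟨v, hv⟩ := exists_isCyclotomicValuation (Complex.isPrimitiveRoot_exp e he0) he0
  simpa only [seqDegree_congr hres] using hv.sum_seqDegree_nonneg hΛ hκ' (by omega)

theorem eventually_dvdIndicator_eq (k : ℤ) :
    ∀ᶠ e in atTop, dvdIndicator e k = dvdIndicator 0 k := by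
  filter_upwards [eventually_gt_atTop k.natAbs] with e he
  have hdvd : (e : ℤ) ∣ k ↔ ((0 : ℕ) : ℤ) ∣ k := by
    rw [Nat.cast_zero, zero_dvd_iff]
    refine ⟨fun h => Int.eq_zero_of_abs_lt_dvd h (by rw [Int.abs_eq_natAbs]; omega), ?_⟩
    rintro rfl
    exact dvd_zero _
  simp only [dvdIndicator, hdvd]

theorem IsDiagramSet.eventually_dNode_eq (hS : IsDiagramSet ℓ S) (hA : Removable ℓ S A)
    (κ : ℕ → ℤ) : ∀ᶠ e in atTop, dNode ℓ e κ S A = dNode ℓ 0 κ S A := by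
  filter_upwards [eventually_ne_atTop 1,
    (eventually_all_finset (rowsBelow ℓ S.ncard A)).mpr fun p _ =>
      (eventually_dvdIndicator_eq _).and (eventually_dvdIndicator_eq _),
    (eventually_all_finset (Finset.Ico A.1 ℓ)).mpr fun l _ => eventually_dvdIndicator_eq _]
    with e he hrows hends
  rw [hS.dNode_eq_sum le_rfl he hA, hS.dNode_eq_sum le_rfl zero_ne_one hA,
    Finset.sum_congr rfl hends]
  congr 1
  refine Finset.sum_congr rfl fun p hp => ?_
  rw [rowDegree, (hrows p hp).1, (hrows p hp).2, rowDegree]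

theorem IsStandardSeq.eventually_seqDegree_eq (ha : IsStandardSeq n Λ a) (hΛ : IsDiagramSet ℓ Λ)
    (κ : ℕ → ℤ) : ∀ᶠ e in atTop, seqDegree ℓ e κ n a = seqDegree ℓ 0 κ n a := by
  have h : ∀ᶠ e in atTop, ∀ k ∈ Finset.range n,
      dNode ℓ e κ (insert (a k) (initialShape a k)) (a k) =
        dNode ℓ 0 κ (insert (a k) (initialShape a k)) (a k) := by
    refine (eventually_all_finset _).mpr fun k hk => ?_
    rw [Finset.mem_range] at hk
    exact (ha.isDiagramSet_insert hΛ hk).eventually_dNode_eq (ha.removable hΛ hk) κ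
  exact h.mono fun e he => Finset.sum_congr rfl he

theorem sum_seqDegree_nonneg (he : e ≠ 1) (hΛ : IsDiagramSet ℓ Λ)
    [Fintype {a | IsStandardSeq n Λ a}] (κ : ℕ → ℤ) :
    0 ≤ ∑ a : {a | IsStandardSeq n Λ a}, seqDegree ℓ e κ n a := by
  obtain rfl | he' : e = 0 ∨ 2 ≤ e := by omega
  · have hev : ∀ᶠ e in atTop, ∀ a : {a | IsStandardSeq n Λ a},
        seqDegree ℓ e κ n a = seqDegree ℓ 0 κ n a :=
      eventually_all.mpr fun a => a.2.eventually_seqDegree_eq hΛ κ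
    obtain ⟨e, hE, he⟩ := (hev.and (eventually_ge_atTop 2)).exists
    simpa only [hE] using sum_seqDegree_nonneg_of_two_le (n := n) he hΛ κ
  · exact sum_seqDegree_nonneg_of_two_le he' hΛ κ

end ArbitraryCharges

section Tableaux

variable {ℓ n : ℕ}

theorem Multipartition.part_le (μ : Multipartition ℓ n) (l r : ℕ) : μ.part l r ≤ n := by
  obtain hl | hl := le_or_gt ℓ l
  · simp [μ.comp_bound l hl]
  obtain hr | hr := le_or_gt n r
  · simp [μ.row_bound l r hr]
  calc μ.part l r ≤ ∑ r ∈ Finset.range n, μ.part l r :=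
        Finset.single_le_sum_of_canonicallyOrdered (Finset.mem_range.mpr hr)
    _ ≤ ∑ l ∈ Finset.range ℓ, ∑ r ∈ Finset.range n, μ.part l r :=
        Finset.single_le_sum_of_canonicallyOrdered
          (f := fun l => ∑ r ∈ Finset.range n, μ.part l r) (Finset.mem_range.mpr hl)
    _ = n := μ.size

theorem Multipartition.isDiagramSet_diagram (μ : Multipartition ℓ n) :
    IsDiagramSet ℓ μ.diagram := by
  have hcomp : ∀ A ∈ μ.diagram, A.1 < ℓ := fun A hA => by
    by_contra! hl
    exact (μ.comp_bound _ hl A.2.1).not_gt (Nat.zero_le _ |>.trans_lt hA)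
  have hrow : ∀ A ∈ μ.diagram, A.2.1 < n := fun A hA => by
    by_contra! hr
    exact (μ.row_bound A.1 _ hr).not_gt (Nat.zero_le _ |>.trans_lt hA)
  have hcol : ∀ A ∈ μ.diagram, A.2.2 < n := fun A hA => lt_of_lt_of_le hA (μ.part_le _ _)
  refine ⟨?_, hcomp, fun l r c h => (Nat.lt_succ_self c).trans h,
    fun l r c h => lt_of_lt_of_le h (μ.antitone l (Nat.le_succ r))⟩
  exact ((Set.finite_Iio ℓ).prod ((Set.finite_Iio n).prod (Set.finite_Iio n))).subset
    fun A hA => ⟨hcomp A hA, hrow A hA, hcol A hA⟩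

theorem IsStandardSeq.lt_of_nodeLE {Λ : Set Node} {a : ℕ → Node} (ha : IsStandardSeq n Λ a)
    {A B : Node} (hA : A ∈ Λ) (hB : B ∈ Λ) (h : NodeLE A B) (hne : A ≠ B) :
    Function.invFunOn a (Set.Iio n) A < Function.invFunOn a (Set.Iio n) B := by
  have hinv := ha.bijOn.invOn_invFunOn
  have hmem := (ha.bijOn.symm hinv.symm).mapsTo
  refine lt_of_le_of_ne (ha.le_of_nodeLE _ _ (hmem hA) (hmem hB) ?_) fun h => hne ?_
  · rwa [hinv.2 hA, hinv.2 hB]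
  · rw [← hinv.2 hA, h, hinv.2 hB]

namespace StdTableau

variable (T : StdTableau ℓ n)

/-- The sequence of the nodes of `T` in the order of their entries, extended by zero. -/
noncomputable def seq (k : ℕ) : Node := if k < n then T.node (k + 1) else 0

variable {T} {k : ℕ}

theorem seq_of_lt (hk : k < n) : T.seq k = T.node (k + 1) := if_pos hk

theorem invOn_node : Set.InvOn T.node T.entry T.shape.diagram (Set.Icc 1 n) :=
  T.bijOn.invOn_invFunOn

theorem entry_seq (hk : k < n) : T.entry (T.seq k) = k + 1 := by
  rw [seq_of_lt hk]
  exact invOn_node.2 ⟨Nat.le_add_left 1 k, hk⟩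

theorem seq_entry_sub_one {A : Node} (hA : A ∈ T.shape.diagram) : T.seq (T.entry A - 1) = A := by
  obtain ⟨hpos, hle⟩ := T.bijOn.mapsTo hA
  rw [seq_of_lt (by omega), Nat.sub_add_cancel hpos, invOn_node.1 hA]

theorem bijOn_seq : Set.BijOn T.seq (Set.Iio n) T.shape.diagram := by
  refine ⟨fun k hk => ?_, fun i hi j hj h => ?_, fun A hA => ?_⟩
  · rw [seq_of_lt hk]
    exact (T.bijOn.symm invOn_node.symm).mapsTo ⟨Nat.le_add_left 1 k, hk⟩
  · exact Nat.add_right_cancel (by rw [← entry_seq hi, ← entry_seq hj, h] : i + 1 = j + 1)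
  · obtain ⟨hpos, hle⟩ := T.bijOn.mapsTo hA
    exact ⟨T.entry A - 1, Set.mem_Iio.mpr (by omega), seq_entry_sub_one hA⟩

theorem entry_le_entry {A B : Node} (hB : B ∈ T.shape.diagram) (h : NodeLE A B) :
    T.entry A ≤ T.entry B := by
  obtain ⟨l, r, c⟩ := A
  obtain ⟨l', r', c'⟩ := B
  obtain ⟨rfl : l = l', hr : r ≤ r', hc : c ≤ c'⟩ := h
  have hΛ := T.shape.isDiagramSet_diagram
  have hrow : T.entry (l, r', c) ≤ T.entry (l, r', c') := by
    induction c', hc using Nat.le_induction with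
    | base => exact le_rfl
    | succ m _ ih => exact (ih (hΛ.2.2.1 _ _ _ hB)).trans (T.row_inc _ _ _ hB).le
  have hB' : (l, r', c) ∈ T.shape.diagram :=
    hΛ.mem_of_nodeLE (B := (l, r', c')) ⟨rfl, le_rfl, hc⟩ hB
  have hcol : T.entry (l, r, c) ≤ T.entry (l, r', c) := by
    clear hrow hB
    induction r', hr using Nat.le_induction with
    | base => exact le_rfl
    | succ m _ ih => exact (ih (hΛ.2.2.2 _ _ _ hB')).trans (T.col_inc _ _ _ hB').le
  exact hcol.trans hrow

theorem isStandardSeq_seq : IsStandardSeq n T.shape.diagram T.seq where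
  eq_zero i hi := if_neg hi.not_gt
  bijOn := bijOn_seq
  le_of_nodeLE i j hi hj h := by
    simpa [entry_seq hi, entry_seq hj] using entry_le_entry (bijOn_seq.mapsTo hj) h

theorem setOf_entry_le_succ (hk : k < n) :
    {A | A ∈ T.shape.diagram ∧ T.entry A ≤ k + 1} =
      insert (T.seq k) (initialShape T.seq k) := by
  rw [← initialShape_succ]
  ext A
  constructor
  · rintro ⟨hA, hle⟩
    have hpos := (T.bijOn.mapsTo hA).1
    exact ⟨T.entry A - 1, Set.mem_Iio.mpr (by omega), seq_entry_sub_one hA⟩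
  · rintro ⟨i, hi, rfl⟩
    rw [Set.mem_Iio] at hi
    have hi' : i < n := by omega
    exact ⟨bijOn_seq.mapsTo hi', (entry_seq hi').trans_le hi⟩

theorem degE_eq_seqDegree (e : ℕ) (κ : ℕ → ℤ) : degE e κ T = seqDegree ℓ e κ n T.seq := by
  rw [degE, seqDegree, ← Finset.Ico_add_one_right_eq_Icc, Finset.sum_Ico_eq_sum_range,
    Nat.add_sub_cancel]
  refine Finset.sum_congr rfl fun k hk => ?_
  have hk : k < n := Finset.mem_range.mp hk
  rw [add_comm 1 k, setOf_entry_le_succ hk, seq_of_lt hk]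

theorem ext_of_seq_eq {T' : StdTableau ℓ n} (hshape : T.shape = T'.shape) (hseq : T.seq = T'.seq) :
    T = T' := by
  have hentry : T.entry = T'.entry := by
    funext A
    by_cases hA : A ∈ T.shape.diagram
    · obtain ⟨k, hk, rfl⟩ := T.bijOn_seq.surjOn hA
      rw [entry_seq hk, hseq, entry_seq hk]
    · rw [T.entry_zero A hA, T'.entry_zero A (hshape ▸ hA)]
  cases T
  cases T'
  congr

end StdTableau

/-- The standard tableau whose nodes, in the order of their entries, are `a 0, …, a (n - 1)`. -/
noncomputable def IsStandardSeq.toStdTableau {μ : Multipartition ℓ n} {a : ℕ → Node}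
    (ha : IsStandardSeq n μ.diagram a) : StdTableau ℓ n where
  shape := μ
  entry A := if A ∈ μ.diagram then Function.invFunOn a (Set.Iio n) A + 1 else 0
  entry_zero A hA := if_neg hA
  bijOn := by
    have hinv := (ha.bijOn.symm ha.bijOn.invOn_invFunOn.symm)
    have hsucc : Set.BijOn (· + 1) (Set.Iio n) (Set.Icc 1 n) :=
      ⟨fun k hk => ⟨Nat.le_add_left 1 k, hk⟩, (add_left_injective 1).injOn,
        fun k hk => ⟨k - 1, Set.mem_Iio.mpr (by have := hk.1; have := hk.2; omega),
          Nat.sub_add_cancel hk.1⟩⟩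
    exact (hsucc.comp hinv).congr fun A hA => (if_pos hA).symm
  row_inc l r c h := by
    have h' := μ.isDiagramSet_diagram.2.2.1 _ _ _ h
    rw [if_pos h, if_pos h']
    exact Nat.succ_lt_succ (ha.lt_of_nodeLE h' h ⟨rfl, le_rfl, Nat.le_succ c⟩ (by simp))
  col_inc l r c h := by
    have h' := μ.isDiagramSet_diagram.2.2.2 _ _ _ h
    rw [if_pos h, if_pos h']
    exact Nat.succ_lt_succ (ha.lt_of_nodeLE h' h ⟨rfl, Nat.le_succ r, le_rfl⟩ (by simp))

theorem IsStandardSeq.seq_toStdTableau {μ : Multipartition ℓ n} {a : ℕ → Node}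
    (ha : IsStandardSeq n μ.diagram a) : ha.toStdTableau.seq = a := by
  funext k
  by_cases hk : k < n
  · have hmem : a k ∈ μ.diagram := ha.bijOn.mapsTo hk
    have hentry : ha.toStdTableau.entry (a k) = k + 1 := by
      change ite _ _ _ = _
      rw [if_pos hmem, ha.bijOn.invOn_invFunOn.1 hk]
    simpa [hentry] using ha.toStdTableau.seq_entry_sub_one hmem
  · rw [ha.eq_zero k (not_lt.mp hk), StdTableau.seq, if_neg hk]

theorem sum_degE_nonneg {e : ℕ} (he : e ≠ 1) (κ : ℕ → ℤ) (μ : Multipartition ℓ n) :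
    0 ≤ ∑ᶠ T : {T : StdTableau ℓ n // T.shape = μ}, degE e κ T.1 := by
  have hΛ := μ.isDiagramSet_diagram
  have := (finite_setOf_isStandardSeq (n := n) hΛ.1).fintype
  let seq : {T : StdTableau ℓ n // T.shape = μ} → {a | IsStandardSeq n μ.diagram a} :=
    fun ⟨T, hT⟩ => ⟨T.seq, hT ▸ T.isStandardSeq_seq⟩
  have hseq : Function.Bijective seq :=
    ⟨fun T T' h => Subtype.ext
      (StdTableau.ext_of_seq_eq (T.2.trans T'.2.symm) (congrArg Subtype.val h)),
      fun a => ⟨⟨a.2.toStdTableau, rfl⟩, Subtype.ext a.2.seq_toStdTableau⟩⟩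
  calc 0 ≤ ∑ a : {a | IsStandardSeq n μ.diagram a}, seqDegree ℓ e κ n a :=
        sum_seqDegree_nonneg he hΛ κ
    _ = ∑ᶠ a : {a | IsStandardSeq n μ.diagram a}, seqDegree ℓ e κ n a :=
        (finsum_eq_sum_of_fintype _).symm
    _ = ∑ᶠ T : {T : StdTableau ℓ n // T.shape = μ}, degE e κ T.1 :=
        (finsum_eq_of_bijective seq hseq fun T => T.1.degE_eq_seqDegree e κ).symm

end Tableaux

/-- `deg_e(λ) = Σ_{T ∈ Std(λ)} deg_e(T) ≥ 0` for every
`e ∈ {0, 2, 3, 4, …}`, and `Deg_p(λ) = Σ_{k ≥ 1} deg_{p^k}(λ) ≥ 0` for every prime `p`. -/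
theorem deg_nonneg (n ℓ : ℕ) (hℓ : 1 ≤ ℓ) (κ : ℕ → ℤ) (μ : Multipartition ℓ n) :
    (∀ e : ℕ, e ≠ 1 →
      0 ≤ ∑ᶠ T : {T : StdTableau ℓ n // T.shape = μ}, degE e κ T.1) ∧
    ∀ p : ℕ, p.Prime →
      0 ≤ ∑ᶠ (k : ℕ) (_ : 1 ≤ k),
            ∑ᶠ T : {T : StdTableau ℓ n // T.shape = μ}, degE (p ^ k) κ T.1 := by
  refine ⟨fun e he => sum_degE_nonneg he κ μ, fun p hp =>
    finsum_nonneg fun k => finsum_nonneg fun hk => sum_degE_nonneg ?_ κ μ⟩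
  exact (Nat.one_lt_pow (by omega) hp.one_lt).ne'

end Paper
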